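/- Let D ⊆ ℝ[X₁,…,Xₙ]\{0} be a multiplicatively closed set with 1 ∈ D, let E = D⁻¹ℝ[X₁,…,Xₙ], and let S = {g₁,…,g_m} ⊆ ℝ[X₁,…,Xₙ] be a finite set with K_S ≠ ∅. Assume there exist p ∈ D and an integer k ≥ 1 such that p(a) ≥ 1 for all a ∈ K_S and k·p(a) − (a₁²+⋯+aₙ²) ≥ 0 for all a ∈ K_S. Then the closure of T_S^E in the finest locally convex topology on E equals Pos^E(K_S \ ⋃_{d∈D} Z(d)); equivalently, an element R ∈ E satisfies L(R) ≥ 0 for every linear functional L on E with L(T_S^E) ⊆ [0,∞) if and only if R ⪰ 0 on K_S \ ⋃_{d∈D} Z(d). -/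

import Mathlib

/-!
The inclusion from left to right is tested by evaluation at the points of `K_S` where no denominator
vanishes; such evaluations are functionals on the localization that are nonnegative on `T_S^E`.

For the converse let `L ≥ 0` on `T_S^E`.

1. *Positivstellensatz*. A proper preordering of `ℝ[X]` extends to an ordering of a residue field,
   which embeds into an ordered field with the intermediate value property for polynomials. A
   solution of `g ≥ 0` there is carried to `ℝ`: sign-preserving partial isomorphisms extend to
   further elements after passing to ultrapowers, and solvability descends from ultrapowers.
2. *Nonnegativity on `K_S`*. If `f ≥ 0` on `K_S`, then `L (f e²) ≥ 0` for every `e` in the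
   localization. The growth condition lets a multiple of a power of the unit `p` dominate `f`, and a
   convexity argument on the moments of the normalized `f` removes the denominators from the
   Positivstellensatz certificates.
3. *Representing measure*. The Riesz extension theorem extends `L` to `E × C_c(ℝⁿ)`, positively with
   respect to pointwise nonnegativity on `K_S`; Riesz–Markov–Kakutani yields a measure `μ` on `ℝⁿ`
   with `∫ ψ dμ ≤ L e` whenever the fraction `e` dominates `ψ` on `K_S`.
4. *The zeros of the denominators are null*. If `d(a) = 0`, then comparison with a multiple of
   `d^(-2(n+1))` gives `μ (B(a, r)) ≤ c r^(2(n+1))`. Since this is `o(rⁿ)`, Besicovitch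
   differentiation against Lebesgue measure shows that the set of all such `a` is `μ`-null, although
   the union over `d` may be uncountable. So `f ≥ 0` holds `μ`-almost everywhere as soon as it holds
   on `K_S` off the zeros, and truncating `f` gives `L f ≥ 0`.

For `R = f / d` the last step is applied to the polynomial `f d` and the functional
`e ↦ L (e / d²)`.
-/

open MvPolynomial MeasureTheory

noncomputable section

/-- The Euclidean (weak) topology on a real vector space; for finite-dimensional
spaces this is the usual Euclidean topology. -/
def weakTop (V : Type*) [AddCommGroup V] [Module ℝ V] : TopologicalSpace V :=
  ⨅ L : V →ₗ[ℝ] ℝ, TopologicalSpace.induced L inferInstance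

/-- The topology of finitely open sets: `O` is open iff its intersection with every
finite-dimensional subspace `U` is open in the Euclidean topology of `U`. -/
def finTop (E : Type*) [AddCommGroup E] [Module ℝ E] : TopologicalSpace E where
  IsOpen O := ∀ U : Submodule ℝ E, FiniteDimensional ℝ U →
    @IsOpen _ (weakTop U) ((Subtype.val : U → E) ⁻¹' O)
  isOpen_univ := by
    intro U _
    letI := weakTop U
    rw [Set.preimage_univ]
    exact isOpen_univ
  isOpen_inter := by
    intro s t hs ht U hU
    letI := weakTop U
    rw [Set.preimage_inter]
    exact (hs U hU).inter (ht U hU)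
  isOpen_sUnion := by
    intro s hs U hU
    letI := weakTop U
    rw [Set.preimage_sUnion]
    exact isOpen_biUnion fun t ht => hs t ht U hU

/-- The closure of a convex cone in the finest locally convex topology, via the dual
characterization: `x` lies in the closure iff `L x ≥ 0` for every linear functional `L`
nonnegative on the cone. -/
def dualClosure {E : Type*} [AddCommGroup E] [Module ℝ E] (C : Set E) : Set E :=
  {x | ∀ L : E →ₗ[ℝ] ℝ, (∀ c ∈ C, 0 ≤ L c) → 0 ≤ L x}

/-- The preordering generated by `g 1, …, g m` in a commutative ring: all finite sums
of elements `σ • g₁^ν₁ ⋯ g_m^ν_m` with `σ` a sum of squares and `ν ∈ {0,1}^m`. -/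
def genPreordering {E : Type*} [CommRing E] {m : ℕ} (g : Fin m → E) : Set E :=
  {x | ∃ σ : (Fin m → Bool) → E, (∀ ν, IsSumSq (σ ν)) ∧
    x = ∑ ν : Fin m → Bool, σ ν * ∏ j, (if ν j then g j else 1)}

/-- The basic closed semialgebraic set determined by `g 1, …, g m`. -/
def KS {n m : ℕ} (g : Fin m → MvPolynomial (Fin n) ℝ) : Set (Fin n → ℝ) :=
  {x | ∀ i, 0 ≤ eval x (g i)}

/-- The real zero set of a polynomial. -/
def Zset {n : ℕ} (d : MvPolynomial (Fin n) ℝ) : Set (Fin n → ℝ) :=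
  {x | eval x d = 0}

/-- `Pos^E(𝒳)`: elements of the localization having a representation `f/d` with
`f·d ≥ 0 pointwise on 𝒳`. -/
def PosE {n : ℕ} (D : Submonoid (MvPolynomial (Fin n) ℝ)) (X : Set (Fin n → ℝ)) :
    Set (Localization D) :=
  {R | ∃ (f : MvPolynomial (Fin n) ℝ) (d : D), R = Localization.mk f d ∧
    ∀ x ∈ X, 0 ≤ eval x f * eval x (d : MvPolynomial (Fin n) ℝ)}

/-! ### Orderings from preorderings -/

universe u

section RingPreordering

variable {A : Type*} [CommRing A]

/-- The subsemiring `P + xP` obtained by adjoining `x` to a preordering `P`; it is a preordering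
exactly when it omits `-1`. -/
def adjoinPreordering (P : RingPreordering A) (x : A) : Subsemiring A where
  carrier := {z | ∃ a ∈ P, ∃ b ∈ P, z = a + x * b}
  zero_mem' := ⟨0, zero_mem P, 0, zero_mem P, by simp⟩
  one_mem' := ⟨1, one_mem P, 0, zero_mem P, by simp⟩
  add_mem' := by
    rintro _ _ ⟨a, ha, b, hb, rfl⟩ ⟨c, hc, d, hd, rfl⟩
    exact ⟨a + c, add_mem ha hc, b + d, add_mem hb hd, by ring⟩
  mul_mem' := by
    rintro _ _ ⟨a, ha, b, hb, rfl⟩ ⟨c, hc, d, hd, rfl⟩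
    exact ⟨a * c + (x * x) * (b * d),
      add_mem (mul_mem ha hc) (mul_mem (P.mul_self_mem x) (mul_mem hb hd)),
      a * d + b * c, add_mem (mul_mem ha hd) (mul_mem hb hc), by ring⟩

lemma exists_le_isMax_preordering (P : RingPreordering A) : ∃ Q, P ≤ Q ∧ IsMax Q := by
  refine zorn_le_nonempty_Ici₀ P (fun c _ hc T hT => ?_) P le_rfl
  have hdir : DirectedOn (· ≤ ·) (RingPreordering.toSubsemiring '' c) :=
    directedOn_image.2 hc.directedOn
  have hmem {x : A} : x ∈ sSup (RingPreordering.toSubsemiring '' c) ↔ ∃ Q ∈ c, x ∈ Q := by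
    rw [Subsemiring.mem_sSup_of_directedOn (Set.Nonempty.image _ ⟨T, hT⟩) hdir]
    exact Set.exists_mem_image
  refine ⟨⟨sSup (RingPreordering.toSubsemiring '' c), fun hx => ?_, fun h => ?_⟩,
    fun Q hQ x hx => ?_⟩
  · exact hmem.2 ⟨T, hT, T.mem_of_isSquare hx⟩
  · obtain ⟨Q, -, hQ⟩ := hmem.1 h
    exact Q.neg_one_notMem hQ
  · exact hmem.2 ⟨Q, hQ, hx⟩

lemma exists_neg_one_eq_of_isMax {P : RingPreordering A} (hP : IsMax P) {x : A} (hx : x ∉ P) :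
    ∃ a ∈ P, ∃ b ∈ P, (-1 : A) = a + x * b := by
  by_contra h
  have hle : (P : Set A) ⊆ adjoinPreordering P x := fun a ha => ⟨a, ha, 0, zero_mem P, by simp⟩
  let Q : RingPreordering A :=
    { adjoinPreordering P x with
      mem_of_isSquare' := fun hy => hle (P.mem_of_isSquare hy)
      neg_one_notMem' := h }
  exact hx (hP (b := Q) hle ⟨0, zero_mem P, 1, one_mem P, by simp⟩)

lemma isOrdering_of_isMax {P : RingPreordering A} (hP : IsMax P) : P.IsOrdering := by
  refine RingPreordering.isOrdering_iff.2 fun x y hxy => ?_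
  by_contra! h
  obtain ⟨a, ha, b, hb, hx⟩ := exists_neg_one_eq_of_isMax hP h.1
  obtain ⟨c, hc, d, hd, hy⟩ := exists_neg_one_eq_of_isMax hP h.2
  -- `xb = -(1 + a)` and `yd = -(1 + c)`, so `-(xy)bd = -(1 + a)(1 + c)`
  have hneg : (-1 : A) = -(x * y) * (b * d) + (a + c + a * c) := by
    linear_combination (1 + c) * hx - x * b * hy
  exact P.neg_one_notMem (hneg ▸ add_mem (mul_mem hxy (mul_mem hb hd))
    (add_mem (add_mem ha hc) (mul_mem ha hc)))

end RingPreordering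

lemma exists_linearOrder_of_ringCone {R : Type*} [CommRing R] [IsDomain R] (C : RingCone R)
    [HasMemOrNegMem C] :
    ∃ (_ : LinearOrder R) (_ : IsStrictOrderedRing R), ∀ x : R, 0 ≤ x ↔ x ∈ C := by
  classical
  let _ : LinearOrder R := .mkOfAddGroupCone C
  have : IsOrderedRing R := .mkOfCone C
  exact ⟨inferInstance, inferInstance, fun x => by simp [PartialOrder.mkOfAddGroupCone_le_iff]⟩

lemma exists_linearOrder_of_preordering {L : Type*} [Field L] (P : RingPreordering L) :
    ∃ (_ : LinearOrder L) (_ : IsStrictOrderedRing L), ∀ x ∈ P, 0 ≤ x := by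
  obtain ⟨Q, hPQ, hQ⟩ := exists_le_isMax_preordering P
  have := isOrdering_of_isMax hQ
  let C : RingCone L := { Q with eq_zero_of_mem_of_neg_mem' := Q.eq_zero_of_mem_of_neg_mem }
  have : HasMemOrNegMem C := ⟨fun x => mem_or_neg_mem Q x⟩
  obtain ⟨o, ho, hC⟩ := exists_linearOrder_of_ringCone C
  exact ⟨o, ho, fun x hx => (hC x).2 (hPQ hx)⟩

section WeightedSums

/-- The semiring of finite sums `∑ φ(pᵢ) yᵢ²` with weights `pᵢ` from the monoid `M`. -/
def weightedSums {A L : Type*} [CommSemiring A] [CommSemiring L] (φ : A →+* L) (M : Submonoid A) :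
    Subsemiring L :=
  (M.map φ ⊔ Submonoid.square L).subsemiringClosure

variable {A L : Type*} [CommSemiring A] [CommSemiring L] {φ : A →+* L} {M : Submonoid A}

lemma map_mul_mul_self_mem_weightedSums {p : A} (hp : p ∈ M) (y : L) :
    φ p * (y * y) ∈ weightedSums φ M :=
  AddSubmonoid.subset_closure (Submonoid.mul_mem_sup ⟨p, hp, rfl⟩ ⟨y, rfl⟩)

@[elab_as_elim]
lemma weightedSums_induction {motive : (z : L) → z ∈ weightedSums φ M → Prop}
    (mul_self : ∀ p (hp : p ∈ M) y, motive _ (map_mul_mul_self_mem_weightedSums hp y))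
    (zero : motive 0 (zero_mem _))
    (add : ∀ x y hx hy, motive x hx → motive y hy → motive (x + y) (add_mem hx hy))
    {z : L} (hz : z ∈ weightedSums φ M) : motive z hz := by
  refine AddSubmonoid.closure_induction (fun x hx => ?_) zero add hz
  obtain ⟨_, ⟨p, hp, rfl⟩, _, ⟨y, rfl⟩, rfl⟩ := Submonoid.mem_sup.1 hx
  exact mul_self p hp y

lemma map_mem_weightedSums {L' : Type*} [CommSemiring L'] (ψ : L →+* L') {z : L}
    (hz : z ∈ weightedSums φ M) : ψ z ∈ weightedSums (ψ.comp φ) M := by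
  induction hz using weightedSums_induction with
  | mul_self p hp y => simpa using map_mul_mul_self_mem_weightedSums (φ := ψ.comp φ) hp (ψ y)
  | zero => simp
  | add x y _ _ hx hy => simpa using add_mem hx hy

lemma exists_map_eq_of_mem_weightedSums_comp {L' : Type*} [CommSemiring L'] {ψ : L →+* L'}
    (hψ : Function.Surjective ψ) {z : L'} (hz : z ∈ weightedSums (ψ.comp φ) M) :
    ∃ s ∈ weightedSums φ M, ψ s = z := by
  induction hz using weightedSums_induction with
  | mul_self p hp y =>
    obtain ⟨x, rfl⟩ := hψ y
    exact ⟨_, map_mul_mul_self_mem_weightedSums hp x, by simp⟩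
  | zero => exact ⟨0, zero_mem _, map_zero ψ⟩
  | add _ _ _ _ hx hy =>
    obtain ⟨⟨s, hs, rfl⟩, t, ht, rfl⟩ := And.intro hx hy
    exact ⟨s + t, add_mem hs ht, map_add ψ s t⟩

end WeightedSums

lemma nonneg_of_mem_weightedSums {A L : Type*} [CommSemiring A] [CommRing L] [LinearOrder L]
    [IsStrictOrderedRing L] {φ : A →+* L} {M : Submonoid A} (h : ∀ p ∈ M, 0 ≤ φ p) {z : L}
    (hz : z ∈ weightedSums φ M) : 0 ≤ z :=
  weightedSums_induction (fun p hp y => mul_nonneg (h p hp) (mul_self_nonneg y)) le_rfl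
    (fun _ _ _ _ => add_nonneg) hz

lemma exists_linearOrder_of_neg_one_notMem_weightedSums {A L : Type*} [CommSemiring A] [Field L]
    {φ : A →+* L} {M : Submonoid A} (h : (-1 : L) ∉ weightedSums φ M) :
    ∃ (_ : LinearOrder L) (_ : IsStrictOrderedRing L), ∀ p ∈ M, 0 ≤ φ p := by
  let P : RingPreordering L :=
    { weightedSums φ M with
      mem_of_isSquare' := by
        rintro _ ⟨y, rfl⟩
        simpa using map_mul_mul_self_mem_weightedSums (φ := φ) (one_mem M) y
      neg_one_notMem' := h }
  obtain ⟨o, ho, hP⟩ := exists_linearOrder_of_preordering P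
  refine ⟨o, ho, fun p hp => hP _ ?_⟩
  change φ p ∈ weightedSums φ M
  simpa using map_mul_mul_self_mem_weightedSums (φ := φ) hp 1

lemma exists_mul_eq_of_mem_weightedSums_fractionRing {A : Type*} [CommRing A]
    (P : RingPreordering A) [P.IsOrdering] {z : FractionRing (A ⧸ P.support)}
    (hz : z ∈ weightedSums (algebraMap A (FractionRing (A ⧸ P.support))) P.toSubmonoid) :
    ∃ p ∈ P, ∃ b ∉ P.support, z * algebraMap A _ (b * b) = algebraMap A _ p := by
  induction hz using weightedSums_induction with
  | mul_self p hp y =>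
    obtain ⟨⟨a, b⟩, h⟩ := IsLocalization.surj (nonZeroDivisors (A ⧸ P.support)) y
    obtain ⟨a, rfl⟩ := Ideal.Quotient.mk_surjective a
    obtain ⟨b', hb'⟩ := Ideal.Quotient.mk_surjective (b : A ⧸ P.support)
    replace h : y * algebraMap A _ b' = algebraMap A _ a := by
      rw [← hb'] at h
      exact h
    refine ⟨p * (a * a), mul_mem hp (P.mul_self_mem a), b', fun hb => ?_, ?_⟩
    · exact nonZeroDivisors.coe_ne_zero b (hb' ▸ Ideal.Quotient.eq_zero_iff_mem.2 hb)
    · simp only [map_mul, ← h]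
      ring
  | zero => exact ⟨0, zero_mem P, 1, P.one_notMem_support, by simp⟩
  | add x y _ _ hx hy =>
    obtain ⟨⟨p, hp, b, hb, hx⟩, q, hq, c, hc, hy⟩ := And.intro hx hy
    refine ⟨p * (c * c) + q * (b * b), add_mem (mul_mem hp (P.mul_self_mem c))
      (mul_mem hq (P.mul_self_mem b)), b * c,
      fun h => (Ideal.IsPrime.mem_or_mem inferInstance h).elim hb hc, ?_⟩
    simp only [map_add, map_mul] at hx hy ⊢
    linear_combination (algebraMap A (FractionRing (A ⧸ P.support)) c) ^ 2 * hx +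
      (algebraMap A (FractionRing (A ⧸ P.support)) b) ^ 2 * hy

lemma exists_orderedField_of_preordering {A : Type u} [CommRing A] (P : RingPreordering A) :
    ∃ (F : Type u) (_ : Field F) (_ : LinearOrder F) (_ : IsStrictOrderedRing F) (φ : A →+* F),
      ∀ p ∈ P, 0 ≤ φ p := by
  obtain ⟨Q, hPQ, hQ⟩ := exists_le_isMax_preordering P
  have := isOrdering_of_isMax hQ
  let F := FractionRing (A ⧸ Q.support)
  have hker (a : A) : algebraMap A F a = 0 ↔ a ∈ Q.support := by
    rw [IsScalarTower.algebraMap_apply A (A ⧸ Q.support) F, FaithfulSMul.algebraMap_eq_zero_iff]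
    exact Ideal.Quotient.eq_zero_iff_mem
  have hneg : (-1 : F) ∉ weightedSums (algebraMap A F) Q.toSubmonoid := by
    intro h
    obtain ⟨p, hp, b, hb, h⟩ := exists_mul_eq_of_mem_weightedSums_fractionRing Q h
    have hsupp : p + b * b ∈ Q.support := by
      rw [← hker, map_add, ← h]
      ring
    have hbb : b * b ∈ Q.support :=
      ⟨Q.mul_self_mem b, by simpa using add_mem hp hsupp.2⟩
    exact hb (or_self_iff.1 (Ideal.IsPrime.mem_or_mem inferInstance hbb))
  obtain ⟨o, ho, hpos⟩ := exists_linearOrder_of_neg_one_notMem_weightedSums hneg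
  exact ⟨F, inferInstance, o, ho, algebraMap A F, fun p hp => hpos p (hPQ hp)⟩

/-! ### Real closures -/

/-- The intermediate value property for polynomials over an ordered field, one of the
characterizations of real closed fields. -/
def PolyIVT (R : Type*) [Field R] [LinearOrder R] : Prop :=
  ∀ (f : Polynomial R) (a b : R), a < b → f.eval a * f.eval b < 0 →
    ∃ c, a < c ∧ c < b ∧ f.eval c = 0

lemma exists_natDegree_le_dvd_sub_of_mem_weightedSums {K : Type*} [Field K]
    {M : Submonoid K} {f s : Polynomial K} (hf : f.natDegree ≠ 0)
    (hs : s ∈ weightedSums Polynomial.C M) :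
    ∃ t ∈ weightedSums Polynomial.C M, t.natDegree ≤ 2 * (f.natDegree - 1) ∧ f ∣ s - t := by
  induction hs using weightedSums_induction with
  | mul_self c hc g =>
    refine ⟨_, map_mul_mul_self_mem_weightedSums hc (g % f), ?_, ?_⟩
    · have := Polynomial.natDegree_mod_lt g hf
      refine (Polynomial.natDegree_C_mul_le _ _).trans (Polynomial.natDegree_mul_le.trans ?_)
      omega
    · have hdvd : f ∣ g - g % f :=
        ⟨g / f, by rw [EuclideanDomain.mod_eq_sub_mul_div, sub_sub_cancel]⟩
      convert hdvd.mul_right (Polynomial.C c * (g + g % f)) using 1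
      ring
  | zero => exact ⟨0, zero_mem _, by simp, by simp⟩
  | add s₁ s₂ _ _ h₁ h₂ =>
    obtain ⟨⟨t₁, hM₁, hdeg₁, hdvd₁⟩, t₂, hM₂, hdeg₂, hdvd₂⟩ := And.intro h₁ h₂
    refine ⟨t₁ + t₂, add_mem hM₁ hM₂,
      (Polynomial.natDegree_add_le _ _).trans (max_le hdeg₁ hdeg₂), ?_⟩
    rw [add_sub_add_comm]
    exact dvd_add hdvd₁ hdvd₂

section SignChange

variable {K : Type*} [Field K] [LinearOrder K] [IsStrictOrderedRing K]

lemma exists_irreducible_dvd_of_eval_mul_eval_neg {a b : K} {h : Polynomial K}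
    (hab : h.eval a * h.eval b < 0) : ∃ q, Irreducible q ∧ q ∣ h ∧ q.eval a * q.eval b < 0 := by
  induction h using WfDvdMonoid.induction_on_irreducible with
  | zero => simp at hab
  | unit u hu =>
    obtain ⟨c, -, rfl⟩ := Polynomial.isUnit_iff.1 hu
    simp only [Polynomial.eval_C] at hab
    exact absurd hab (mul_self_nonneg c).not_gt
  | mul h i _ hi ih =>
    by_cases hs : i.eval a * i.eval b < 0
    · exact ⟨i, hi, dvd_mul_right _ _, hs⟩
    · have hlt : h.eval a * h.eval b < 0 := by
        simp only [Polynomial.eval_mul] at hab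
        by_contra! hcon
        nlinarith [mul_nonneg (not_lt.1 hs) hcon]
      obtain ⟨q, hq, hqd, hq'⟩ := ih hlt
      exact ⟨q, hq, hqd.mul_left _, hq'⟩

lemma eval_nonneg_of_mem_weightedSums {s : Polynomial K}
    (hs : s ∈ weightedSums Polynomial.C (Subsemiring.nonneg K).toSubmonoid) (x : K) :
    0 ≤ s.eval x :=
  nonneg_of_mem_weightedSums (fun c hc => by simpa using hc)
    (map_mem_weightedSums (Polynomial.evalRingHom x) hs)

/-- If `f` divided `1 + s` with `deg s ≤ 2 (deg f - 1)`, then in `1 + s = f h` the cofactor `h`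
would have smaller degree than `f` and change sign as well since `f h > 0`; an irreducible factor
of `h` then contradicts induction on the degree. -/
lemma not_dvd_one_add_of_mem_weightedSums {a b : K} {f : Polynomial K} (hf : Irreducible f)
    (hab : f.eval a * f.eval b < 0) {s : Polynomial K}
    (hs : s ∈ weightedSums Polynomial.C (Subsemiring.nonneg K).toSubmonoid) : ¬ f ∣ 1 + s := by
  induction hN : f.natDegree using Nat.strong_induction_on generalizing f s with
  | _ N ih =>
    intro hdvd
    obtain ⟨t, ht, htdeg, hst⟩ :=
      exists_natDegree_le_dvd_sub_of_mem_weightedSums hf.natDegree_pos.ne' hs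
    obtain ⟨h, hfh⟩ : f ∣ 1 + t := by
      convert dvd_sub hdvd hst using 1
      ring
    have hpos (x : K) : 0 < f.eval x * h.eval x := by
      rw [← Polynomial.eval_mul, ← hfh, Polynomial.eval_add, Polynomial.eval_one]
      linarith [eval_nonneg_of_mem_weightedSums ht x]
    have h0 : h ≠ 0 := by
      rintro rfl
      simpa using hpos a
    have hdeg : h.natDegree < f.natDegree := by
      have hmul : (1 + t).natDegree = f.natDegree + h.natDegree := by
        rw [hfh, Polynomial.natDegree_mul hf.ne_zero h0]
      have hle : (1 + t).natDegree ≤ 2 * (f.natDegree - 1) :=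
        (Polynomial.natDegree_add_le _ _).trans (max_le (by simp) htdeg)
      have := hf.natDegree_pos
      omega
    have hsign : h.eval a * h.eval b < 0 := by
      by_contra! hcon
      nlinarith [mul_pos (hpos a) (hpos b), mul_nonneg (neg_nonneg.2 hab.le) hcon]
    obtain ⟨q, hq, hqh, hqab⟩ := exists_irreducible_dvd_of_eval_mul_eval_neg hsign
    exact ih q.natDegree (hN ▸ (Polynomial.natDegree_le_of_dvd hqh h0).trans_lt hdeg) hq hqab ht rfl
      (hqh.trans ⟨f, by rw [hfh, mul_comm]⟩)

lemma exists_linearOrder_adjoinRoot {a b : K} {q : Polynomial K} [Fact (Irreducible q)]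
    (hq : q.eval a * q.eval b < 0) :
    ∃ (_ : LinearOrder (AdjoinRoot q)) (_ : IsStrictOrderedRing (AdjoinRoot q)),
      ∀ x : K, 0 ≤ x → 0 ≤ AdjoinRoot.of q x := by
  refine exists_linearOrder_of_neg_one_notMem_weightedSums (φ := AdjoinRoot.of q)
    (M := (Subsemiring.nonneg K).toSubmonoid) fun hneg => ?_
  obtain ⟨s, hs, hs1⟩ := exists_map_eq_of_mem_weightedSums_comp (φ := Polynomial.C)
    (ψ := AdjoinRoot.mk q) AdjoinRoot.mk_surjective hneg
  refine not_dvd_one_add_of_mem_weightedSums Fact.out hq hs ?_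
  rw [← AdjoinRoot.mk_eq_zero, map_add, map_one, hs1, add_neg_cancel]

lemma mem_Ioo_of_isRoot_of_irreducible {a b t : K} (hab : a < b) {q : Polynomial K}
    (hq : Irreducible q) (ht : q.IsRoot t) (hs : q.eval a * q.eval b < 0) :
    t ∈ Set.Ioo a b := by
  obtain ⟨r, rfl⟩ := Polynomial.dvd_iff_isRoot.2 ht
  obtain ⟨c, -, rfl⟩ := Polynomial.isUnit_iff.1
    ((hq.isUnit_or_isUnit rfl).resolve_left (Polynomial.not_isUnit_X_sub_C t))
  simp only [Polynomial.eval_mul, Polynomial.eval_sub, Polynomial.eval_X, Polynomial.eval_C] at hs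
  have hlt : (a - t) * (b - t) < 0 := by
    by_contra! hcon
    nlinarith [mul_nonneg (mul_self_nonneg c) hcon]
  constructor <;> nlinarith

end SignChange

section RealClosure

lemma map_mem_weightedSums_algebraMap {A K L : Type*} [CommSemiring A] [CommSemiring K]
    [CommSemiring L] [Algebra A K] [Algebra A L] {M : Submonoid A} (e : K →ₐ[A] L) {z : K}
    (hz : z ∈ weightedSums (algebraMap A K) M) : e z ∈ weightedSums (algebraMap A L) M := by
  rw [← e.comp_algebraMap]
  exact map_mem_weightedSums (e : K →+* L) hz

variable {F Ω : Type*} [Field F] [Field Ω] [Algebra F Ω]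

lemma exists_mem_weightedSums_of_mem_iSup {ι : Type*} [Nonempty ι]
    {K : ι → IntermediateField F Ω} (hK : Directed (· ≤ ·) K) {M : Submonoid F}
    {z : (⨆ i, K i : IntermediateField F Ω)} (hz : z ∈ weightedSums (algebraMap F _) M) :
    ∃ i, ∃ w ∈ weightedSums (algebraMap F (K i)) M, (w : Ω) = z := by
  induction hz using weightedSums_induction with
  | mul_self p hp y =>
    obtain ⟨i, hi⟩ : ∃ i, (y : Ω) ∈ K i := by
      simpa [← SetLike.mem_coe, IntermediateField.coe_iSup_of_directed hK] using y.2
    exact ⟨i, _, map_mul_mul_self_mem_weightedSums hp ⟨y, hi⟩, rfl⟩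
  | zero => exact ⟨Classical.arbitrary ι, 0, zero_mem _, by simp⟩
  | add x y _ _ hx hy =>
    obtain ⟨i, v, hv, hvx⟩ := hx
    obtain ⟨j, w, hw, hwy⟩ := hy
    obtain ⟨l, hil, hjl⟩ := hK i j
    have hv' := map_mem_weightedSums_algebraMap (IntermediateField.inclusion hil) hv
    have hw' := map_mem_weightedSums_algebraMap (IntermediateField.inclusion hjl) hw
    exact ⟨l, _, add_mem hv' hw', congrArg₂ (· + ·) hvx hwy⟩

variable [LinearOrder F] [IsStrictOrderedRing F]

/-- The ordering of `F` extends to the intermediate field `K`. -/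
def IsOrderable (K : IntermediateField F Ω) : Prop :=
  (-1 : K) ∉ weightedSums (algebraMap F K) (Subsemiring.nonneg F).toSubmonoid

lemma isOrderable_of_algHom {L : Type*} [Field L] [LinearOrder L] [IsStrictOrderedRing L]
    [Algebra F L] (hL : ∀ x : F, 0 ≤ x → 0 ≤ algebraMap F L x) {K : IntermediateField F Ω}
    (e : K →ₐ[F] L) : IsOrderable K := by
  intro h
  have h' := map_mem_weightedSums_algebraMap e h
  rw [map_neg, map_one] at h'
  exact neg_one_lt_zero.not_ge (nonneg_of_mem_weightedSums hL h')

variable (F Ω) in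
lemma exists_maximal_isOrderable : ∃ K : IntermediateField F Ω, Maximal IsOrderable K := by
  have hbot : IsOrderable (⊥ : IntermediateField F Ω) :=
    isOrderable_of_algHom (fun _ => id) (IntermediateField.botEquiv F Ω)
  refine (zorn_le_nonempty₀ {K : IntermediateField F Ω | IsOrderable K}
    (fun c hc hchain T hT => ?_) ⊥ hbot).imp fun K hK => hK.2
  have : Nonempty c := ⟨T, hT⟩
  refine ⟨⨆ K : c, (K : IntermediateField F Ω), fun h => ?_,
    fun K hK => le_iSup_of_le ⟨K, hK⟩ le_rfl⟩
  obtain ⟨K, w, hw, hw'⟩ := exists_mem_weightedSums_of_mem_iSup hchain.directed h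
  have hw1 : w = -1 := Subtype.ext (by simpa using hw')
  exact hc K.2 (hw1 ▸ hw)

/-- A root `θ` of a sign-changing irreducible polynomial lies in every maximal orderable `K`, since
the ordering of `K` would extend to `K(θ)`. -/
lemma exists_isRoot_of_maximal_isOrderable [IsAlgClosed Ω] {K : IntermediateField F Ω}
    (hK : Maximal IsOrderable K) [LinearOrder K] [IsStrictOrderedRing K]
    (hFK : ∀ x : F, 0 ≤ x → 0 ≤ algebraMap F K x) {a b : K} {q : Polynomial K}
    (hq : Irreducible q) (hs : q.eval a * q.eval b < 0) : ∃ t : K, q.IsRoot t := by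
  have : Fact (Irreducible q) := ⟨hq⟩
  obtain ⟨_, _, hpos⟩ := exists_linearOrder_adjoinRoot hs
  obtain ⟨θ, hθ⟩ := IsAlgClosed.exists_aeval_eq_zero Ω q hq.degree_pos.ne'
  let ψ : AdjoinRoot q →ₐ[K] Ω := AdjoinRoot.liftAlgHom q (Algebra.ofId K Ω) θ hθ
  have hKψ : K ≤ (ψ.restrictScalars F).fieldRange := fun x hx =>
    ⟨AdjoinRoot.of q ⟨x, hx⟩, ψ.commutes ⟨x, hx⟩⟩
  have hF (x : F) (hx : 0 ≤ x) : 0 ≤ algebraMap F (AdjoinRoot q) x := by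
    rw [IsScalarTower.algebraMap_apply F K]
    exact hpos _ (hFK x hx)
  have hψK := hK.le_of_ge
    (isOrderable_of_algHom hF (ψ.restrictScalars F).equivFieldRange.symm.toAlgHom) hKψ
  have hθK : θ ∈ K := hψK ⟨AdjoinRoot.root q, AdjoinRoot.lift_root hθ⟩
  refine ⟨⟨θ, hθK⟩, (algebraMap K Ω).injective ?_⟩
  rw [map_zero, ← hθ, ← Polynomial.aeval_algebraMap_apply_eq_algebraMap_eval]
  rfl

end RealClosure

lemma exists_polyIVT_extension (F : Type u) [Field F] [LinearOrder F] [IsStrictOrderedRing F] :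
    ∃ (R : Type u) (_ : Field R) (_ : LinearOrder R) (_ : IsStrictOrderedRing R) (ι : F →+* R),
      StrictMono ι ∧ PolyIVT R := by
  obtain ⟨K, hK⟩ := exists_maximal_isOrderable F (AlgebraicClosure F)
  obtain ⟨_, _, hpos⟩ := exists_linearOrder_of_neg_one_notMem_weightedSums hK.prop
  refine ⟨K, inferInstance, inferInstance, inferInstance, algebraMap F K, ?_, ?_⟩
  · exact (monotone_iff_map_nonneg _).2 hpos |>.strictMono_of_injective (algebraMap F K).injective
  · intro f a b hab hf
    obtain ⟨q, hq, hqf, hqs⟩ := exists_irreducible_dvd_of_eval_mul_eval_neg hf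
    obtain ⟨t, ht⟩ := exists_isRoot_of_maximal_isOrderable hK hpos hq hqs
    obtain ⟨hat, htb⟩ := mem_Ioo_of_isRoot_of_irreducible hab hq ht hqs
    exact ⟨t, hat, htb, Polynomial.eval_eq_zero_of_dvd_of_eval_eq_zero hqf ht⟩

/-! ### Roots and cuts in two ordered extensions -/

section Rolle

lemma exists_eq_pow_mul_pow_mul_of_isRoot {R : Type*} [CommRing R] [IsDomain R] {f : Polynomial R}
    (hf : f ≠ 0) {a b : R} (hab : a ≠ b) (ha : f.IsRoot a) (hb : f.IsRoot b) :
    ∃ (m k : ℕ) (u : Polynomial R),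
      f = (Polynomial.X - Polynomial.C a) ^ (m + 1) * (Polynomial.X - Polynomial.C b) ^ (k + 1) * u
        ∧ u.eval a ≠ 0 ∧ u.eval b ≠ 0 := by
  obtain ⟨v, hv, hva⟩ := Polynomial.exists_eq_pow_rootMultiplicity_mul_and_not_dvd f hf a
  have hv0 : v ≠ 0 := by
    rintro rfl
    simp at hva
  have hvb : v.IsRoot b := by
    rw [hv] at hb
    exact (Polynomial.root_mul.1 hb).resolve_left (by simp [sub_ne_zero.2 hab.symm])
  obtain ⟨u, hu, hub⟩ := Polynomial.exists_eq_pow_rootMultiplicity_mul_and_not_dvd v hv0 b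
  obtain ⟨m, hm⟩ := Nat.exists_eq_succ_of_ne_zero ((Polynomial.rootMultiplicity_pos hf).2 ha).ne'
  obtain ⟨k, hk⟩ := Nat.exists_eq_succ_of_ne_zero ((Polynomial.rootMultiplicity_pos hv0).2 hvb).ne'
  refine ⟨m, k, u, ?_, fun h => hva ?_, fun h => hub (Polynomial.dvd_iff_isRoot.2 h)⟩
  · rw [mul_assoc, ← Nat.succ_eq_add_one, ← Nat.succ_eq_add_one, ← hm, ← hk, ← hu, ← hv]
  · rw [hu]
    exact (Polynomial.dvd_iff_isRoot.2 h).mul_left _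

lemma derivative_X_sub_C_pow_mul_X_sub_C_pow_mul {R : Type*} [CommRing R] (a b : R) (m k : ℕ)
    (u : Polynomial R) :
    ((Polynomial.X - Polynomial.C a) ^ (m + 1) *
        (Polynomial.X - Polynomial.C b) ^ (k + 1) * u).derivative =
      (Polynomial.X - Polynomial.C a) ^ m * (Polynomial.X - Polynomial.C b) ^ k *
        (Polynomial.C (m + 1 : R) * (Polynomial.X - Polynomial.C b) * u +
          Polynomial.C (k + 1 : R) * (Polynomial.X - Polynomial.C a) * u +
          (Polynomial.X - Polynomial.C a) * (Polynomial.X - Polynomial.C b) * u.derivative) := by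
  simp only [Polynomial.derivative_mul, Polynomial.derivative_X_sub_C_pow, Nat.add_sub_cancel,
    Nat.cast_add, Nat.cast_one]
  ring

namespace PolyIVT

variable {R : Type*} [Field R] [LinearOrder R] [IsStrictOrderedRing R]

lemma eval_mul_eval_pos (hR : PolyIVT R) {f : Polynomial R} {x y : R} (hxy : x ≤ y)
    (h : ∀ z ∈ Set.Icc x y, f.eval z ≠ 0) : 0 < f.eval x * f.eval y := by
  obtain rfl | hlt := hxy.eq_or_lt
  · exact mul_self_pos.2 (h x ⟨le_rfl, le_rfl⟩)
  · by_contra! hle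
    obtain ⟨c, hxc, hcy, hc⟩ := hR f x y hlt (hle.lt_of_ne
      (mul_ne_zero (h x ⟨le_rfl, hxy⟩) (h y ⟨hxy, le_rfl⟩)))
    exact h c ⟨hxc.le, hcy.le⟩ hc

/-- Dividing `f'` by the powers of `X - a` and `X - b` in it leaves a polynomial that changes sign
between `a` and `b`. -/
lemma exists_derivative_eval_eq_zero_of_consecutive (hR : PolyIVT R) {f : Polynomial R}
    (hf : f ≠ 0) {a b : R} (hab : a < b) (ha : f.IsRoot a) (hb : f.IsRoot b)
    (hno : ∀ z ∈ Set.Ioo a b, f.eval z ≠ 0) : ∃ c ∈ Set.Ioo a b, f.derivative.eval c = 0 := by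
  obtain ⟨m, k, u, rfl, hua, hub⟩ := exists_eq_pow_mul_pow_mul_of_isRoot hf hab.ne ha hb
  have hu : ∀ z ∈ Set.Icc a b, u.eval z ≠ 0 := by
    rintro z ⟨haz, hzb⟩ h
    obtain rfl | haz := haz.eq_or_lt
    · exact hua h
    obtain rfl | hzb := hzb.eq_or_lt
    · exact hub h
    exact hno z ⟨haz, hzb⟩ (by rw [Polynomial.eval_mul, h, mul_zero])
  rw [derivative_X_sub_C_pow_mul_X_sub_C_pow_mul]
  set h : Polynomial R := Polynomial.C (m + 1 : R) * (Polynomial.X - Polynomial.C b) * u +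
    Polynomial.C (k + 1 : R) * (Polynomial.X - Polynomial.C a) * u +
    (Polynomial.X - Polynomial.C a) * (Polynomial.X - Polynomial.C b) * u.derivative with hh
  have hha : h.eval a = (m + 1) * (a - b) * u.eval a := by simp [hh]
  have hhb : h.eval b = (k + 1) * (b - a) * u.eval b := by simp [hh]
  have hsign : h.eval a * h.eval b < 0 := by
    have : 0 < b - a := sub_pos.2 hab
    have hmk : 0 < ((m + 1 : R) * (k + 1)) * ((b - a) * (b - a)) * (u.eval a * u.eval b) :=
      mul_pos (by positivity) (hR.eval_mul_eval_pos hab.le hu)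
    rw [hha, hhb]
    linear_combination hmk
  obtain ⟨c, hac, hcb, hc⟩ := hR h a b hab hsign
  exact ⟨c, ⟨hac, hcb⟩, by rw [Polynomial.eval_mul, hc, mul_zero]⟩

lemma exists_derivative_eval_eq_zero (hR : PolyIVT R) {f : Polynomial R} (hf : f ≠ 0) {a b : R}
    (hab : a < b) (ha : f.IsRoot a) (hb : f.IsRoot b) :
    ∃ c ∈ Set.Ioo a b, f.derivative.eval c = 0 := by
  have hfin : {z | f.IsRoot z ∧ z ∈ Set.Ioc a b}.Finite :=
    (Polynomial.finite_setOfPred_isRoot hf).subset fun z hz => hz.1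
  obtain ⟨b', ⟨hb', hab', hbb'⟩, hmin⟩ := Set.exists_min_image _ id hfin ⟨b, hb, hab, le_rfl⟩
  obtain ⟨c, hc, hc'⟩ := hR.exists_derivative_eval_eq_zero_of_consecutive hf hab' ha hb'
    fun z hz hz' => (hmin z ⟨hz', hz.1, hz.2.le.trans hbb'⟩).not_gt hz.2
  exact ⟨c, ⟨hc.1, hc.2.trans_le hbb'⟩, hc'⟩

/-- Without critical points in `(a, b)`, the sign of `f` tells on which side of the root `β` a
point lies. -/
lemma eval_mul_eval_mul_sub_neg (hR : PolyIVT R) {f : Polynomial R} {a b β c : R}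
    (hβ : β ∈ Set.Ioo a b) (hfβ : f.IsRoot β) (hd : ∀ z ∈ Set.Ioo a b, f.derivative.eval z ≠ 0)
    (hc : c ∈ Set.Icc a b) (hcβ : c ≠ β) : f.eval a * f.eval c * (c - β) < 0 := by
  have hf : f ≠ 0 := by
    rintro rfl
    exact hd β hβ (by simp)
  obtain ⟨u, rfl⟩ := Polynomial.dvd_iff_isRoot.2 hfβ
  have hu : ∀ z ∈ Set.Icc a b, u.eval z ≠ 0 := by
    rintro z ⟨haz, hzb⟩ hz
    have hroot : ((Polynomial.X - Polynomial.C β) * u).IsRoot z := by simp [hz]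
    rcases lt_trichotomy z β with h | rfl | h
    · obtain ⟨w, hw, hw'⟩ := hR.exists_derivative_eval_eq_zero hf h hroot hfβ
      exact hd w ⟨haz.trans_lt hw.1, hw.2.trans hβ.2⟩ hw'
    · exact hd z hβ (by simp [hz])
    · obtain ⟨w, hw, hw'⟩ := hR.exists_derivative_eval_eq_zero hf h hfβ hroot
      exact hd w ⟨hβ.1.trans hw.1, hw.2.trans_le hzb⟩ hw'
  have huac := hR.eval_mul_eval_pos hc.1 fun z hz => hu z ⟨hz.1, hz.2.trans hc.2⟩
  have hpos := mul_pos (mul_pos (sub_pos.2 hβ.1) (mul_self_pos.2 (sub_ne_zero.2 hcβ))) huac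
  simp only [Polynomial.eval_mul, Polynomial.eval_sub, Polynomial.eval_X, Polynomial.eval_C]
  linear_combination hpos

end PolyIVT

end Rolle

lemma abs_lt_of_isRoot {R : Type*} [Field R] [LinearOrder R] [IsStrictOrderedRing R]
    {f : Polynomial R} (hf : f ≠ 0) {x : R} (hx : f.IsRoot x) :
    |x| < 1 + ∑ k ∈ Finset.range f.natDegree, |f.coeff k / f.leadingCoeff| := by
  have hlc : f.leadingCoeff ≠ 0 := Polynomial.leadingCoeff_ne_zero.2 hf
  by_contra! hle
  set s := ∑ k ∈ Finset.range f.natDegree, |f.coeff k / f.leadingCoeff| with hs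
  have hx1 : 1 ≤ |x| :=
    (le_add_of_nonneg_right (Finset.sum_nonneg fun _ _ => abs_nonneg _)).trans hle
  have hN : f.natDegree ≠ 0 := fun h => by
    rw [Polynomial.eq_C_of_natDegree_eq_zero h] at hf hx
    simp_all
  obtain ⟨N, hN⟩ := Nat.exists_eq_succ_of_ne_zero hN
  have hlead : x ^ f.natDegree =
      -∑ k ∈ Finset.range f.natDegree, f.coeff k / f.leadingCoeff * x ^ k := by
    rw [Polynomial.IsRoot, Polynomial.eval_eq_sum_range, Finset.sum_range_succ] at hx
    rw [Finset.sum_congr rfl fun k _ => div_mul_eq_mul_div _ _ _, ← Finset.sum_div]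
    rw [← neg_div, eq_div_iff hlc, mul_comm]
    exact (neg_eq_of_add_eq_zero_right hx).symm
  have hle' : |x| ^ f.natDegree ≤ s * |x| ^ N := by
    rw [← abs_pow, hlead, abs_neg, hs, Finset.sum_mul]
    refine (Finset.abs_sum_le_sum_abs _ _).trans (Finset.sum_le_sum fun k hk => ?_)
    rw [abs_mul, abs_pow]
    have hkN : k ≤ N := by
      have := Finset.mem_range.1 hk
      omega
    gcongr
  rw [hN, pow_succ'] at hle'
  linarith [le_of_mul_le_mul_right hle' (pow_pos (one_pos.trans_le hx1) N)]

section SameCut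

/-- The points `α` and `β` of two ordered extensions of `K` realize the same cut of `K`. -/
def SameCut {K S T : Type*} [Preorder S] [Preorder T] (i : K → S) (j : K → T) (α : S) (β : T) :
    Prop :=
  ∀ c, (i c < α ↔ j c < β) ∧ (α < i c ↔ β < j c)

variable {K S T : Type*} [LinearOrder S] [LinearOrder T]

lemma SameCut.eq_iff {i : K → S} {j : K → T} {α : S} {β : T} (h : SameCut i j α β) (c : K) :
    α = i c ↔ β = j c := by
  simp only [le_antisymm_iff, ← not_lt, h c]

lemma SameCut.mem_uIcc_iff {i : K → S} {j : K → T} {α : S} {β : T} (h : SameCut i j α β)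
    [LinearOrder K] (hi : StrictMono i) (hj : StrictMono j) (c z : K) :
    i z ∈ Set.uIcc α (i c) ↔ j z ∈ Set.uIcc β (j c) := by
  simp only [Set.mem_uIcc, ← not_lt, hi.lt_iff_lt, hj.lt_iff_lt, h z]

lemma exists_Ioo_forall_notMem [LinearOrder K] {i : K → S} {β : S} (hβ : β ∉ Set.range i) {l u : K}
    (hl : i l < β) (hu : β < i u) (Z : Finset K) :
    ∃ a b, i a < β ∧ β < i b ∧ ∀ z ∈ Z, z ∉ Set.Ioo a b := by
  induction Z using Finset.induction_on with
  | empty => exact ⟨l, u, hl, hu, by simp⟩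
  | insert z Z _ ih =>
    obtain ⟨a, b, ha, hb, hZ⟩ := ih
    rcases lt_or_gt_of_ne fun h : i z = β => hβ ⟨z, h⟩ with hz | hz
    · refine ⟨max a z, b, by rcases max_choice a z with h | h <;> rwa [h], hb, ?_⟩
      simp only [Finset.forall_mem_insert, Set.mem_Ioo, max_lt_iff] at hZ ⊢
      exact ⟨fun h => h.1.2.false, fun y hy h => hZ y hy ⟨h.1.1, h.2⟩⟩
    · refine ⟨a, min b z, ha, by rcases min_choice b z with h | h <;> rwa [h], ?_⟩
      simp only [Finset.forall_mem_insert, Set.mem_Ioo, lt_min_iff] at hZ ⊢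
      exact ⟨fun h => h.2.2.false, fun y hy h => hZ y hy ⟨h.1, h.2.1⟩⟩

lemma exists_forall_notMem_uIcc [LinearOrder K] [DenselyOrdered K] [NoMinOrder K] [NoMaxOrder K]
    [Nonempty K] {i : K → S} (hi : StrictMono i) {α : S} (Z : Finset K) (hZ : ∀ z ∈ Z, i z ≠ α) :
    ∃ c, ∀ z ∈ Z, i z ∉ Set.uIcc α (i c) := by
  classical
  obtain ⟨c, hlt, hgt⟩ := Order.exists_between_finsets (Z.filter fun z => i z < α)
    (Z.filter fun z => α < i z) fun x hx y hy =>
      hi.lt_iff_lt.1 ((Finset.mem_filter.1 hx).2.trans (Finset.mem_filter.1 hy).2)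
  refine ⟨c, fun z hz hmem => ?_⟩
  rcases lt_or_gt_of_ne (hZ z hz) with h | h
  · have hzc := hi (hlt z (Finset.mem_filter.2 ⟨hz, h⟩))
    exact (lt_min h hzc).not_ge hmem.1
  · have hcz := hi (hgt z (Finset.mem_filter.2 ⟨hz, h⟩))
    exact (max_lt h hcz).not_ge hmem.2

end SameCut

section TwoFields

/-- All roots of `q` in the extension `i : K → R` lie in the base field `K`. -/
def RootsIn {K R : Type*} [Field K] [Field R] (i : K →+* R) (q : Polynomial K) : Prop :=
  ∀ γ : R, (q.map i).IsRoot γ → γ ∈ Set.range i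

variable {K R : Type*} [Field K] [LinearOrder K] [Field R] [LinearOrder R]

lemma RootsIn.eval_map_ne_zero {i : K →+* R} (hi : StrictMono i) {q : Polynomial K}
    (hq : RootsIn i q) {a b : K} (h : ∀ z ∈ Set.Ioo a b, q.eval z ≠ 0) :
    ∀ z ∈ Set.Ioo (i a) (i b), (q.map i).eval z ≠ 0 := by
  rintro z ⟨haz, hzb⟩ hz
  obtain ⟨c, rfl⟩ := hq z hz
  rw [Polynomial.eval_map_apply, map_eq_zero] at hz
  exact h c ⟨hi.lt_iff_lt.1 haz, hi.lt_iff_lt.1 hzb⟩ hz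

lemma map_pos_iff {i : K →+* R} (hi : StrictMono i) {x : K} : 0 < i x ↔ 0 < x := by
  rw [← hi.lt_iff_lt, map_zero]

variable [IsStrictOrderedRing R]

lemma PolyIVT.eval_map_pos_iff_of_notMem_uIcc (hR : PolyIVT R) {i : K →+* R} (hi : StrictMono i)
    {q : Polynomial K} (hq : RootsIn i q) {α : R} {c : K}
    (h : ∀ z, q.IsRoot z → i z ∉ Set.uIcc α (i c)) : 0 < (q.map i).eval α ↔ 0 < q.eval c := by
  have hno : ∀ z ∈ Set.uIcc α (i c), (q.map i).eval z ≠ 0 := by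
    intro z hz h0
    obtain ⟨w, rfl⟩ := hq z h0
    rw [Polynomial.eval_map_apply, map_eq_zero] at h0
    exact h w h0 hz
  have hpos : 0 < (q.map i).eval α * (q.map i).eval (i c) := by
    rcases le_total α (i c) with hle | hle
    · exact hR.eval_mul_eval_pos hle (Set.uIcc_of_le hle ▸ hno)
    · rw [mul_comm]
      exact hR.eval_mul_eval_pos hle (Set.uIcc_of_ge hle ▸ hno)
  rw [pos_iff_pos_of_mul_pos hpos, Polynomial.eval_map_apply, map_pos_iff hi]

variable [IsStrictOrderedRing K]

lemma exists_abs_lt_of_isRoot_map {i : K →+* R} (hi : StrictMono i) {q : Polynomial K}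
    (hq : q ≠ 0) : ∃ M : K, ∀ γ : R, (q.map i).IsRoot γ → |γ| < i M := by
  have habs (x : K) : i |x| = |i x| := by
    rw [abs_eq_max_neg, hi.monotone.map_max, map_neg, ← abs_eq_max_neg]
  refine ⟨1 + ∑ k ∈ Finset.range q.natDegree, |q.coeff k / q.leadingCoeff|, fun γ hγ => ?_⟩
  simpa [habs] using abs_lt_of_isRoot ((Polynomial.map_ne_zero_iff i.injective).2 hq) hγ

lemma PolyIVT.map_lt_iff_and_lt_map_iff (hR : PolyIVT R) {i : K →+* R} (hi : StrictMono i)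
    {q : Polynomial K} (hq : RootsIn i q.derivative) {a b : K}
    (hab : ∀ z ∈ Set.Ioo a b, q.derivative.eval z ≠ 0) {α : R} (hα : (q.map i).IsRoot α)
    (hαab : α ∈ Set.Ioo (i a) (i b)) {c : K} (hc : c ∈ Set.Icc a b) :
    (i c < α ↔ 0 < q.eval a * q.eval c) ∧ (α < i c ↔ q.eval a * q.eval c < 0) := by
  by_cases hcα : i c = α
  · have hqc : q.eval c = 0 := by
      rwa [← hcα, Polynomial.IsRoot, Polynomial.eval_map_apply, map_eq_zero] at hα
    simp [hcα, hqc]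
  · have hd := hq.eval_map_ne_zero hi hab
    rw [← Polynomial.derivative_map] at hd
    have hneg := hR.eval_mul_eval_mul_sub_neg hαab hα hd
      ⟨hi.monotone hc.1, hi.monotone hc.2⟩ hcα
    rw [Polynomial.eval_map_apply, Polynomial.eval_map_apply, ← map_mul, mul_neg_iff,
      map_pos_iff hi, ← map_zero i, hi.lt_iff_lt] at hneg
    simp only [map_zero, sub_pos, sub_neg] at hneg
    grind

variable {R₁ R₂ : Type*} [Field R₁] [LinearOrder R₁] [IsStrictOrderedRing R₁]
  [Field R₂] [LinearOrder R₂] [IsStrictOrderedRing R₂] {i : K →+* R₁} {j : K →+* R₂}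

lemma PolyIVT.sameCut_of_isRoot (hR₁ : PolyIVT R₁) (hR₂ : PolyIVT R₂) (hi : StrictMono i)
    (hj : StrictMono j) {q : Polynomial K} (h₁ : RootsIn i q.derivative)
    (h₂ : RootsIn j q.derivative) {a b : K} (hab : ∀ z ∈ Set.Ioo a b, q.derivative.eval z ≠ 0)
    {α : R₁} (hα : (q.map i).IsRoot α) (hαab : α ∈ Set.Ioo (i a) (i b))
    {β : R₂} (hβ : (q.map j).IsRoot β) (hβab : β ∈ Set.Ioo (j a) (j b)) :
    SameCut i j α β := by
  intro c
  rcases lt_or_ge c a with hca | hac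
  · have hcα := (hi hca).trans hαab.1
    have hcβ := (hj hca).trans hβab.1
    exact ⟨iff_of_true hcα hcβ, iff_of_false hcα.not_gt hcβ.not_gt⟩
  rcases lt_or_ge b c with hbc | hcb
  · have hαc := hαab.2.trans (hi hbc)
    have hβc := hβab.2.trans (hj hbc)
    exact ⟨iff_of_false hαc.not_gt hβc.not_gt, iff_of_true hαc hβc⟩
  have hα' := hR₁.map_lt_iff_and_lt_map_iff hi h₁ hab hα hαab ⟨hac, hcb⟩
  have hβ' := hR₂.map_lt_iff_and_lt_map_iff hj h₂ hab hβ hβab ⟨hac, hcb⟩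
  exact ⟨hα'.1.trans hβ'.1.symm, hα'.2.trans hβ'.2.symm⟩

lemma PolyIVT.exists_isRoot_sameCut (hR₁ : PolyIVT R₁) (hR₂ : PolyIVT R₂) (hi : StrictMono i)
    (hj : StrictMono j) {q : Polynomial K} (hq' : q.derivative ≠ 0)
    (h₁ : RootsIn i q.derivative) (h₂ : RootsIn j q.derivative) {β : R₂}
    (hβ : (q.map j).IsRoot β) : ∃ α : R₁, (q.map i).IsRoot α ∧ SameCut i j α β := by
  by_cases hβK : β ∈ Set.range j
  · obtain ⟨c, rfl⟩ := hβK
    refine ⟨i c, ?_, fun d => by simp only [hi.lt_iff_lt, hj.lt_iff_lt, and_self]⟩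
    rw [Polynomial.IsRoot, Polynomial.eval_map_apply, map_eq_zero] at hβ ⊢
    exact hβ
  have hq : q ≠ 0 := by
    rintro rfl
    simp at hq'
  obtain ⟨M, hM⟩ := exists_abs_lt_of_isRoot_map hj hq
  have hβM := abs_lt.1 (hM β hβ)
  rw [← map_neg] at hβM
  obtain ⟨a, b, haβ, hβb, hZ⟩ :=
    exists_Ioo_forall_notMem hβK hβM.1 hβM.2 q.derivative.roots.toFinset
  have hab : ∀ z ∈ Set.Ioo a b, q.derivative.eval z ≠ 0 := fun z hz h0 =>
    hZ z (by simpa [hq'] using h0) hz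
  have hlt : a < b := hj.lt_iff_lt.1 (haβ.trans hβb)
  have hneg : q.eval a * q.eval b < 0 :=
    (hR₂.map_lt_iff_and_lt_map_iff hj h₂ hab hβ ⟨haβ, hβb⟩ ⟨hlt.le, le_rfl⟩).2.1 hβb
  obtain ⟨α, haα, hαb, hα⟩ := hR₁ (q.map i) (i a) (i b) (hi hlt) (by
    rw [Polynomial.eval_map_apply, Polynomial.eval_map_apply, ← map_mul, ← map_zero i]
    exact hi hneg)
  exact ⟨α, hα, hR₁.sameCut_of_isRoot hR₂ hi hj h₁ h₂ hab hα ⟨haα, hαb⟩ hβ ⟨haβ, hβb⟩⟩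

lemma PolyIVT.rootsIn_of_forall_natDegree_lt (hR₁ : PolyIVT R₁) (hR₂ : PolyIVT R₂)
    (hi : StrictMono i) (hj : StrictMono j) {d : ℕ}
    (h : ∀ q : Polynomial K, q ≠ 0 → q.natDegree < d → RootsIn i q) {q : Polynomial K}
    (hq : q ≠ 0) (hd : q.natDegree < d) : RootsIn j q := by
  induction he : q.natDegree using Nat.strong_induction_on generalizing q with
  | _ e ih =>
    intro β hβ
    by_cases h0 : q.natDegree = 0
    · rw [Polynomial.eq_C_of_natDegree_eq_zero h0] at hβ hq
      simp_all
    have hdlt := Polynomial.natDegree_derivative_lt h0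
    have hq' : q.derivative ≠ 0 := fun h => h0 (Polynomial.derivative_eq_zero.1 h)
    obtain ⟨α, hα, hαβ⟩ := hR₁.exists_isRoot_sameCut hR₂ hi hj hq' (h _ hq' (hdlt.trans hd))
      (ih _ (he ▸ hdlt) hq' (hdlt.trans hd) rfl) hβ
    obtain ⟨c, rfl⟩ := h q hq hd α hα
    exact ⟨c, ((hαβ.eq_iff c).1 rfl).symm⟩

lemma PolyIVT.eval_map_pos_iff_of_sameCut (hR₁ : PolyIVT R₁) (hR₂ : PolyIVT R₂)
    (hi : StrictMono i) (hj : StrictMono j) {q : Polynomial K} (h₁ : RootsIn i q)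
    (h₂ : RootsIn j q) {α : R₁} {β : R₂} (hαβ : SameCut i j α β) :
    0 < (q.map i).eval α ↔ 0 < (q.map j).eval β := by
  by_cases hq : q = 0
  · simp [hq]
  have hroot (z : K) : z ∈ q.roots.toFinset ↔ q.IsRoot z := by simp [hq]
  by_cases hex : ∃ z, q.IsRoot z ∧ α = i z
  · obtain ⟨z, hz, rfl⟩ := hex
    rw [(hαβ.eq_iff z).1 rfl, Polynomial.eval_map_apply, Polynomial.eval_map_apply, hz]
    simp
  push Not at hex
  obtain ⟨c, hc⟩ := exists_forall_notMem_uIcc hi q.roots.toFinset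
    fun z hz => (hex z ((hroot z).1 hz)).symm
  rw [hR₁.eval_map_pos_iff_of_notMem_uIcc hi h₁ fun z hz => hc z ((hroot z).2 hz),
    hR₂.eval_map_pos_iff_of_notMem_uIcc hj h₂ fun z hz =>
      (hαβ.mem_uIcc_iff hi hj c z).not.1 (hc z ((hroot z).2 hz))]

end TwoFields

/-! ### Transfer through ultrapowers and the Positivstellensatz -/

/-- The subring of quotients `x / y` with `x` and `y` in the subring `G`, where `y` is a unit of the
ambient ring. -/
def unitFractions {A : Type*} [CommRing A] (G : Subring A) : Subring A where
  carrier := {z | ∃ x ∈ G, ∃ y ∈ G, IsUnit y ∧ z * y = x}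
  zero_mem' := ⟨0, zero_mem _, 1, one_mem _, isUnit_one, by simp⟩
  one_mem' := ⟨1, one_mem _, 1, one_mem _, isUnit_one, by simp⟩
  neg_mem' := by
    rintro z ⟨x, hx, y, hy, hu, rfl⟩
    exact ⟨_, neg_mem hx, y, hy, hu, neg_mul z y⟩
  add_mem' := by
    rintro z z' ⟨x, hx, y, hy, hu, rfl⟩ ⟨x', hx', y', hy', hu', rfl⟩
    exact ⟨_, add_mem (mul_mem hx hy') (mul_mem hx' hy), y * y', mul_mem hy hy', hu.mul hu',
      by ring⟩
  mul_mem' := by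
    rintro z z' ⟨x, hx, y, hy, hu, rfl⟩ ⟨x', hx', y', hy', hu', rfl⟩
    exact ⟨_, mul_mem hx hx', y * y', mul_mem hy hy', hu.mul hu', mul_mul_mul_comm ..⟩

section SignCompat

variable {R₁ R₂ : Type*} [Field R₁] [Field R₂]

/-- The values at `(α, β)` of the polynomials over a common subfield `K` of `R₁` and `R₂`. -/
def evalGraph {K : Type*} [Field K] (i : K →+* R₁) (j : K →+* R₂) (α : R₁) (β : R₂) :
    Subring (R₁ × R₂) :=
  ((Polynomial.eval₂RingHom i α).prod (Polynomial.eval₂RingHom j β)).range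

lemma map_mem_evalGraph {K : Type*} [Field K] (i : K →+* R₁) (j : K →+* R₂) (α : R₁) (β : R₂)
    (c : K) : (i c, j c) ∈ evalGraph i j α β :=
  ⟨Polynomial.C c, by simp⟩

lemma self_mem_evalGraph {K : Type*} [Field K] (i : K →+* R₁) (j : K →+* R₂) (α : R₁) (β : R₂) :
    (α, β) ∈ evalGraph i j α β :=
  ⟨Polynomial.X, by simp⟩

variable [LinearOrder R₁] [LinearOrder R₂]

/-- A subring of `R₁ × R₂` that is the graph of a sign-preserving partial isomorphism. -/
def SignCompat (G : Subring (R₁ × R₂)) : Prop := ∀ z ∈ G, 0 < z.1 ↔ 0 < z.2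

namespace SignCompat

variable {G : Subring (R₁ × R₂)}

lemma exists_le_maximal (hG : SignCompat G) : ∃ H, G ≤ H ∧ Maximal SignCompat H := by
  refine zorn_le_nonempty₀ {H : Subring (R₁ × R₂) | SignCompat H}
    (fun c hc hchain H hH => ⟨sSup c, fun z hz => ?_, fun _ => le_sSup⟩) G hG
  obtain ⟨s, hs, hzs⟩ := (Subring.mem_sSup_of_directedOn ⟨H, hH⟩ hchain.directedOn).1 hz
  exact hc hs z hzs

lemma evalGraph_iff {K : Type*} [Field K] {i : K →+* R₁} {j : K →+* R₂} {α : R₁} {β : R₂} :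
    SignCompat (evalGraph i j α β) ↔
      ∀ q : Polynomial K, 0 < (q.map i).eval α ↔ 0 < (q.map j).eval β := by
  simp only [SignCompat, evalGraph, RingHom.mem_range, Polynomial.eval_map]
  exact ⟨fun h q => h _ ⟨q, rfl⟩, by rintro h _ ⟨q, rfl⟩; exact h q⟩

variable [IsStrictOrderedRing R₁] [IsStrictOrderedRing R₂]

lemma neg_iff (hG : SignCompat G) {z : R₁ × R₂} (hz : z ∈ G) : z.1 < 0 ↔ z.2 < 0 := by
  simpa using hG (-z) (neg_mem hz)

lemma eq_zero_iff (hG : SignCompat G) {z : R₁ × R₂} (hz : z ∈ G) : z.1 = 0 ↔ z.2 = 0 := by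
  simp only [le_antisymm_iff, ← not_lt, hG z hz, hG.neg_iff hz]

lemma eq_of_mem (hG : SignCompat G) {x : R₁} {y y' : R₂} (hy : (x, y) ∈ G) (hy' : (x, y') ∈ G) :
    y = y' := by
  simpa [sub_eq_zero] using (hG.eq_zero_iff (sub_mem hy hy')).1 (sub_self x)

lemma unitFractions (hG : SignCompat G) : SignCompat (unitFractions G) := by
  rintro z ⟨x, hx, y, hy, hu, rfl⟩
  have h := hG _ (mul_mem hx hy)
  obtain ⟨h₁, h₂⟩ := Prod.isUnit_iff.1 hu
  simpa only [Prod.fst_mul, Prod.snd_mul, mul_assoc,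
    mul_pos_iff_of_pos_right (mul_self_pos.2 h₁.ne_zero),
    mul_pos_iff_of_pos_right (mul_self_pos.2 h₂.ne_zero)] using h

lemma inv_mem_of_maximal (hG : Maximal SignCompat G) {z : R₁ × R₂} (hz : z ∈ G) : z⁻¹ ∈ G := by
  by_cases h : z.1 = 0
  · have hz0 : z = 0 := Prod.ext h ((hG.prop.eq_zero_iff hz).1 h)
    have hinv : z⁻¹ = 0 := by ext <;> simp [hz0]
    exact hinv ▸ zero_mem G
  · have hu : IsUnit z :=
      Prod.isUnit_iff.2 ⟨isUnit_iff_ne_zero.2 h,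
        isUnit_iff_ne_zero.2 ((hG.prop.eq_zero_iff hz).not.1 h)⟩
    refine hG.le_of_ge hG.prop.unitFractions
      (fun y hy => ⟨y, hy, 1, one_mem G, isUnit_one, mul_one y⟩) ⟨1, one_mem G, z, hz, hu, ?_⟩
    obtain ⟨h₁, h₂⟩ := Prod.isUnit_iff.1 hu
    ext
    · exact inv_mul_cancel₀ h₁.ne_zero
    · exact inv_mul_cancel₀ h₂.ne_zero

lemma exists_embedding (hG : SignCompat G) (hinv : ∀ z ∈ G, z⁻¹ ∈ G) :
    ∃ (K : Subfield R₁) (j : K →+* R₂), StrictMono j ∧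
      ∀ x y, (x, y) ∈ G ↔ ∃ h : x ∈ K, j ⟨x, h⟩ = y := by
  let K : Subfield R₁ :=
    { G.map (RingHom.fst R₁ R₂) with
      inv_mem' := by
        rintro _ ⟨z, hz, rfl⟩
        exact ⟨z⁻¹, hinv z hz, rfl⟩ }
  have hK (x : K) : ∃ y, ((x : R₁), y) ∈ G := by
    obtain ⟨_, ⟨x, y⟩, h, rfl⟩ := x
    exact ⟨y, h⟩
  choose j hj using hK
  let φ : K →+* R₂ :=
    { toFun := j
      map_zero' := hG.eq_of_mem (hj 0) (zero_mem G)
      map_one' := hG.eq_of_mem (hj 1) (one_mem G)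
      map_add' := fun x y => hG.eq_of_mem (hj (x + y)) (add_mem (hj x) (hj y))
      map_mul' := fun x y => hG.eq_of_mem (hj (x * y)) (mul_mem (hj x) (hj y)) }
  refine ⟨K, φ, fun x y hxy => ?_, fun x y => ⟨fun h => ?_, ?_⟩⟩
  · exact sub_pos.1 ((hG _ (sub_mem (hj y) (hj x))).1 (sub_pos.2 hxy))
  · exact ⟨⟨(x, y), h, rfl⟩, hG.eq_of_mem (hj _) h⟩
  · rintro ⟨h, rfl⟩
    exact hj ⟨x, h⟩

lemma exists_maximal_embedding (hG : SignCompat G) :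
    ∃ (K : Subfield R₁) (j : K →+* R₂), StrictMono j ∧
      (∀ x y, (x, y) ∈ G → ∃ h : x ∈ K, j ⟨x, h⟩ = y) ∧
      ∀ α β, SignCompat (evalGraph K.subtype j α β) → α ∈ K := by
  obtain ⟨H, hGH, hH⟩ := hG.exists_le_maximal
  obtain ⟨K, j, hj, hHK⟩ := hH.prop.exists_embedding fun z hz => inv_mem_of_maximal hH hz
  refine ⟨K, j, hj, fun x y h => (hHK x y).1 (hGH h), fun α β hαβ => ?_⟩
  have hle : H ≤ evalGraph K.subtype j α β := by
    rintro ⟨x, y⟩ h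
    obtain ⟨hx, rfl⟩ := (hHK x y).1 h
    exact map_mem_evalGraph K.subtype j α β ⟨x, hx⟩
  exact ((hHK α β).1 (hH.le_of_ge hαβ hle (self_mem_evalGraph K.subtype j α β))).1

end SignCompat

variable [IsStrictOrderedRing R₁] [IsStrictOrderedRing R₂]

lemma eval_map_mod_of_isRoot {K R : Type*} [Field K] [Field R] {i : K →+* R} {q : Polynomial K}
    {α : R} (hα : (q.map i).IsRoot α) (f : Polynomial K) :
    ((f % q).map i).eval α = (f.map i).eval α := by
  conv_rhs => rw [← EuclideanDomain.div_add_mod f q]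
  rw [Polynomial.map_add, Polynomial.map_mul, Polynomial.eval_add, Polynomial.eval_mul, hα.eq_zero,
    zero_mul, zero_add]

/-- By induction on the degree, a root `α` of `q` has a partner `β` realizing the same cut, and
`α ↦ β` preserves the signs of all polynomials, since these may be reduced modulo `q`. -/
lemma PolyIVT.rootsIn_of_maximal_embedding (hR₁ : PolyIVT R₁) (hR₂ : PolyIVT R₂)
    {K : Subfield R₁} {j : K →+* R₂} (hj : StrictMono j)
    (hmax : ∀ α β, SignCompat (evalGraph K.subtype j α β) → α ∈ K)
    {q : Polynomial K} (hq : q ≠ 0) : RootsIn K.subtype q := by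
  have hi : StrictMono K.subtype := fun _ _ h => h
  induction hd : q.natDegree using Nat.strong_induction_on generalizing q with
  | _ d ih =>
    subst hd
    have h₁ (r : Polynomial K) (hr : r ≠ 0) (hlt : r.natDegree < q.natDegree) :
        RootsIn K.subtype r := ih _ hlt hr rfl
    have h₂ (r : Polynomial K) (hr : r ≠ 0) (hlt : r.natDegree < q.natDegree) : RootsIn j r :=
      hR₁.rootsIn_of_forall_natDegree_lt hR₂ hi hj h₁ hr hlt
    intro α hα
    have h0 : q.natDegree ≠ 0 := fun h0 => by
      rw [Polynomial.eq_C_of_natDegree_eq_zero h0] at hα hq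
      simp_all
    have hdlt := Polynomial.natDegree_derivative_lt h0
    have hq' : q.derivative ≠ 0 := fun h => h0 (Polynomial.derivative_eq_zero.1 h)
    obtain ⟨β, hβ, hβα⟩ :=
      hR₂.exists_isRoot_sameCut hR₁ hj hi hq' (h₂ _ hq' hdlt) (h₁ _ hq' hdlt) hα
    refine ⟨⟨α, hmax α β (SignCompat.evalGraph_iff.2 fun f => ?_)⟩, rfl⟩
    rw [← eval_map_mod_of_isRoot hα, ← eval_map_mod_of_isRoot hβ]
    by_cases hr : f % q = 0
    · simp [hr]
    have hlt := Polynomial.natDegree_mod_lt f h0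
    exact (hR₂.eval_map_pos_iff_of_sameCut hR₁ hj hi (h₂ _ hr hlt) (h₁ _ hr hlt) hβα).symm

end SignCompat

section Ultrapower

/-- The diagonal embedding into an ultrapower. -/
def germConst {I : Type*} (U : Ultrafilter I) {R : Type*} [Semiring R] :
    R →+* (U : Filter I).Germ R :=
  (Filter.Germ.coeRingHom (U : Filter I)).comp (Pi.constRingHom I R)

lemma germConst_strictMono {I : Type*} (U : Ultrafilter I) {R : Type*} [Field R] [LinearOrder R] :
    StrictMono (germConst U : R →+* (U : Filter I).Germ R) :=
  fun _ _ h => Filter.Germ.const_lt h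

lemma coeRingHom_surjective {I R : Type*} [Semiring R] (l : Filter I) :
    Function.Surjective (Filter.Germ.coeRingHom (R := R) l) :=
  Quotient.mk_surjective

lemma PolyIVT.germ {I : Type*} (U : Ultrafilter I) {R : Type*} [Field R] [LinearOrder R]
    [IsStrictOrderedRing R] (hR : PolyIVT R) : PolyIVT ((U : Filter I).Germ R) := by
  intro f a b hab hf
  obtain ⟨F, rfl⟩ := Polynomial.map_surjective _ (coeRingHom_surjective _) f
  obtain ⟨a, rfl⟩ := coeRingHom_surjective _ a
  obtain ⟨b, rfl⟩ := coeRingHom_surjective _ b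
  have heval (x : I → R) (s : I) :
      F.eval x s = (F.map (Pi.evalRingHom (fun _ => R) s)).eval (x s) :=
    (Polynomial.eval_map_apply (Pi.evalRingHom (fun _ => R) s) x).symm
  rw [Polynomial.eval_map_apply, Polynomial.eval_map_apply, ← map_mul] at hf
  have hroot : ∀ᶠ s in (U : Filter I), ∃ c, a s < c ∧ c < b s ∧
      (F.map (Pi.evalRingHom (fun _ => R) s)).eval c = 0 := by
    filter_upwards [Filter.Germ.coe_lt.1 hab,
      (Filter.Germ.coe_lt (f := F.eval a * F.eval b) (g := 0)).1 hf] with s hs hs'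
    refine hR _ _ _ hs ?_
    rw [← heval, ← heval]
    exact hs'
  obtain ⟨c, hc⟩ := hroot.choice
  refine ⟨Filter.Germ.coeRingHom _ c, Filter.Germ.coe_lt.2 (hc.mono fun s hs => hs.1),
    Filter.Germ.coe_lt.2 (hc.mono fun s hs => hs.2.1), ?_⟩
  rw [Polynomial.eval_map_apply]
  refine Filter.Germ.coe_eq.2 (hc.mono fun s hs => ?_)
  rw [heval]
  exact hs.2.2

lemma exists_forall_eval₂_nonneg_of_germ {I : Type*} (U : Ultrafilter I) {R : Type*} [Field R]
    [LinearOrder R] {A σ κ : Type*} [CommRing A] [Finite κ] (c : A →+* R)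
    (g : κ → MvPolynomial σ A) {y : σ → (U : Filter I).Germ R}
    (hy : ∀ k, 0 ≤ (g k).eval₂ ((germConst U).comp c) y) :
    ∃ y : σ → R, ∀ k, 0 ≤ (g k).eval₂ c y := by
  choose z hz using fun k => coeRingHom_surjective _ (y k)
  obtain rfl : (Filter.Germ.coeRingHom (R := R) (U : Filter I)) ∘ z = y := funext hz
  have hev (k : κ) : ∀ᶠ s in (U : Filter I), 0 ≤ (g k).eval₂ c fun l => z l s := by
    have hk := hy k
    rw [germConst, RingHom.comp_assoc, ← eval₂_comp_left] at hk
    filter_upwards [Filter.Germ.coe_le.1 hk] with s hs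
    have hs' := eval₂_comp_left (Pi.evalRingHom (fun _ => R) s) ((Pi.constRingHom I R).comp c) z
      (g k)
    exact hs.trans_eq hs'
  obtain ⟨s, hs⟩ := (Filter.eventually_all.2 hev).exists
  exact ⟨fun l => z l s, hs⟩

/-- By density each finite part of a cut is realized in `K`, hence all of it in an ultrapower along
the finite subsets of `K`. -/
lemma exists_sameCut_germConst {K S T : Type*} [LinearOrder K] [DenselyOrdered K] [NoMinOrder K]
    [NoMaxOrder K] [Nonempty K] [LinearOrder S] [Field T] [LinearOrder T] {i : K → S} {j : K → T}
    (hi : StrictMono i) (hj : StrictMono j) (α : S) :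
    ∃ (U : Ultrafilter (Finset K)) (β : (U : Filter (Finset K)).Germ T),
      SameCut i (fun c => germConst U (j c)) α β := by
  classical
  let U : Ultrafilter (Finset K) := Ultrafilter.of Filter.atTop
  have hj' : StrictMono fun c => germConst U (j c) := (germConst_strictMono U).comp hj
  refine ⟨U, ?_⟩
  by_cases hα : α ∈ Set.range i
  · obtain ⟨c, rfl⟩ := hα
    exact ⟨germConst U (j c), fun d => by simp only [hi.lt_iff_lt, hj'.lt_iff_lt, and_self]⟩
  have hbetween (s : Finset K) : ∃ x, (∀ c ∈ s.filter (i · < α), c < x) ∧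
      ∀ c ∈ s.filter (α < i ·), x < c :=
    Order.exists_between_finsets _ _ fun x hx y hy =>
      hi.lt_iff_lt.1 ((Finset.mem_filter.1 hx).2.trans (Finset.mem_filter.1 hy).2)
  choose x hlt hgt using hbetween
  have hev (c : K) : ∀ᶠ s in (U : Filter (Finset K)), c ∈ s :=
    Ultrafilter.of_le _ ((Filter.eventually_ge_atTop {c}).mono fun s hs =>
      hs (Finset.mem_singleton_self c))
  let β : (U : Filter (Finset K)).Germ T := Filter.Germ.ofFun fun s => j (x s)
  have hl (c : K) (hc : i c < α) : germConst U (j c) < β := by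
    refine Filter.Germ.coe_lt.2 ((hev c).mono fun s hs => ?_)
    exact hj (hlt s c (Finset.mem_filter.2 ⟨hs, hc⟩))
  have hr (c : K) (hc : α < i c) : β < germConst U (j c) := by
    refine Filter.Germ.coe_lt.2 ((hev c).mono fun s hs => ?_)
    exact hj (hgt s c (Finset.mem_filter.2 ⟨hs, hc⟩))
  refine ⟨β, fun c => ?_⟩
  rcases lt_or_gt_of_ne fun h : i c = α => hα ⟨c, h⟩ with h | h
  · exact ⟨iff_of_true h (hl c h), iff_of_false h.not_gt (hl c h).not_gt⟩
  · exact ⟨iff_of_false h.not_gt (hr c h).not_gt, iff_of_true h (hr c h)⟩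

end Ultrapower

section Transfer

variable {R₁ : Type u} [Field R₁] [LinearOrder R₁] [IsStrictOrderedRing R₁]

lemma PolyIVT.exists_signCompat_germ {R₂ : Type u} [Field R₂] [LinearOrder R₂]
    [IsStrictOrderedRing R₂] (hR₁ : PolyIVT R₁) (hR₂ : PolyIVT R₂) {G : Subring (R₁ × R₂)}
    (hG : SignCompat G) (α : R₁) :
    ∃ (I : Type u) (U : Ultrafilter I) (β : (U : Filter I).Germ R₂)
      (H : Subring (R₁ × (U : Filter I).Germ R₂)), SignCompat H ∧ (α, β) ∈ H ∧
      ∀ x y, (x, y) ∈ G → (x, germConst U y) ∈ H := by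
  obtain ⟨K, j, hj, hGK, hmax⟩ := hG.exists_maximal_embedding
  have hroots (q : Polynomial K) (hq : q ≠ 0) : RootsIn K.subtype q :=
    hR₁.rootsIn_of_maximal_embedding hR₂ hj hmax hq
  have hi : StrictMono K.subtype := fun _ _ h => h
  obtain ⟨U, β, hαβ⟩ := exists_sameCut_germConst hi hj α
  have hj' : StrictMono ((germConst U).comp j) := (germConst_strictMono U).comp hj
  refine ⟨Finset K, U, β, evalGraph K.subtype ((germConst U).comp j) α β,
    SignCompat.evalGraph_iff.2 fun q => ?_, self_mem_evalGraph .., fun x y hxy => ?_⟩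
  · by_cases hq : q = 0
    · simp [hq]
    have hroots' : RootsIn ((germConst U).comp j) q :=
      hR₁.rootsIn_of_forall_natDegree_lt (hR₂.germ U) hi hj' (fun q hq _ => hroots q hq) hq
        (Nat.lt_succ_self _)
    exact hR₁.eval_map_pos_iff_of_sameCut (hR₂.germ U) hi hj' (hroots q hq) hroots' hαβ
  · obtain ⟨hx, rfl⟩ := hGK x y hxy
    exact map_mem_evalGraph K.subtype ((germConst U).comp j) α β ⟨x, hx⟩

/-- The coordinates of `x` are matched one at a time, in iterated ultrapowers of `R₂`. -/
lemma PolyIVT.exists_forall_eval₂_nonneg {A σ κ : Type*} [CommRing A] [Finite σ] [Finite κ]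
    (hR₁ : PolyIVT R₁) (ι : A →+* R₁) (g : κ → MvPolynomial σ A) {x : σ → R₁}
    (hx : ∀ k, 0 ≤ (g k).eval₂ ι x) {R₂ : Type u} [Field R₂] [LinearOrder R₂]
    [IsStrictOrderedRing R₂] (hR₂ : PolyIVT R₂) (c : A →+* R₂) {G : Subring (R₁ × R₂)}
    (hG : SignCompat G) (hιc : ∀ a, (ι a, c a) ∈ G) :
    ∃ y : σ → R₂, ∀ k, 0 ≤ (g k).eval₂ c y := by
  classical
  cases nonempty_fintype σ
  suffices h : ∀ (s : Finset σ) (R₂ : Type u) [Field R₂] [LinearOrder R₂] [IsStrictOrderedRing R₂]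
      (c : A →+* R₂) (G : Subring (R₁ × R₂)) (y : σ → R₂), PolyIVT R₂ → SignCompat G →
      (∀ a, (ι a, c a) ∈ G) → (∀ l ∉ s, (x l, y l) ∈ G) →
      ∃ y : σ → R₂, ∀ k, 0 ≤ (g k).eval₂ c y from
    h Finset.univ R₂ c G 0 hR₂ hG hιc (by simp)
  intro s
  induction s using Finset.induction_on with
  | empty =>
    intro R₂ _ _ _ c G y _ hG hιc hxy
    have hmem (p : MvPolynomial σ A) : (p.eval₂ ι x, p.eval₂ c y) ∈ G := by
      induction p using MvPolynomial.induction_on with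
      | C a => simpa using hιc a
      | add p q hp hq => simpa using add_mem hp hq
      | mul_X p l hp => simpa using mul_mem hp (hxy l (Finset.notMem_empty l))
    exact ⟨y, fun k => not_lt.1 fun h => (hx k).not_gt ((hG.neg_iff (hmem (g k))).2 h)⟩
  | insert l s _ ih =>
    intro R₂ _ _ _ c G y hR₂ hG hιc hxy
    obtain ⟨I, U, β, H, hH, hβ, hGH⟩ := hR₁.exists_signCompat_germ hR₂ hG (x l)
    obtain ⟨z, hz⟩ := ih ((U : Filter I).Germ R₂) ((germConst U).comp c) H
      (Function.update (fun l' => germConst U (y l')) l β) (hR₂.germ U) hH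
      (fun a => hGH _ _ (hιc a)) fun l' hl' => by
        obtain rfl | hne := eq_or_ne l' l
        · simpa using hβ
        · simpa [hne] using hGH _ _ (hxy l' (by simp [hne, hl']))
    exact exists_forall_eval₂_nonneg_of_germ U c g hz

end Transfer

lemma polyIVT_real : PolyIVT ℝ := by
  intro f a b hab hf
  have hcont : ContinuousOn (fun x => f.eval x) (Set.Icc a b) := f.continuous.continuousOn
  obtain ⟨c, hc, hfc⟩ : (0 : ℝ) ∈ (fun x => f.eval x) '' Set.Ioo a b := by
    rcases mul_neg_iff.1 hf with ⟨ha, hb⟩ | ⟨ha, hb⟩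
    · exact intermediate_value_Ioo' hab.le hcont ⟨hb, ha⟩
    · exact intermediate_value_Ioo hab.le hcont ⟨ha, hb⟩
  exact ⟨c, hc.1, hc.2, hfc⟩

lemma strictMono_of_real_ringHom {R : Type*} [Field R] [LinearOrder R] [IsStrictOrderedRing R]
    (ι : ℝ →+* R) : StrictMono ι := by
  refine Monotone.strictMono_of_injective ((monotone_iff_map_nonneg ι).2 fun a ha => ?_) ι.injective
  rw [← Real.mul_self_sqrt ha, map_mul]
  exact mul_self_nonneg _

/-- The Krivine–Stengle Positivstellensatz; that `-1 ∉ P` is part of `RingPreordering`. -/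
lemma exists_forall_eval_nonneg_of_preordering {σ : Type} {κ : Type*} [Finite σ] [Finite κ]
    (P : RingPreordering (MvPolynomial σ ℝ)) {g : κ → MvPolynomial σ ℝ} (hg : ∀ k, g k ∈ P) :
    ∃ y : σ → ℝ, ∀ k, 0 ≤ eval y (g k) := by
  obtain ⟨F, _, _, _, φ, hφ⟩ := exists_orderedField_of_preordering P
  obtain ⟨R, _, _, _, ι, hι, hR⟩ := exists_polyIVT_extension F
  let ψ : MvPolynomial σ ℝ →+* R := ι.comp φ
  have hψ (p : MvPolynomial σ ℝ) : p.eval₂ (ψ.comp C) (fun l => ψ (X l)) = ψ p := by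
    rw [← Function.comp_def, ← eval₂_comp_left, eval₂_eta]
  have hG : SignCompat ((ψ.comp C).prod (RingHom.id ℝ)).range := by
    rintro _ ⟨r, rfl⟩
    exact map_pos_iff (strictMono_of_real_ringHom (ψ.comp C))
  refine hR.exists_forall_eval₂_nonneg (ψ.comp C) g (x := fun l => ψ (X l)) (fun k => ?_)
    polyIVT_real (RingHom.id ℝ) hG fun r => ⟨r, rfl⟩
  rw [hψ, ← map_zero ι]
  exact hι.monotone (hφ _ (hg k))

/-! ### Functionals that are nonnegative on a preordering -/

lemma antitone_of_convex_of_bddAbove {a : ℕ → ℝ} (hconv : ∀ j, 2 * a (j + 1) ≤ a j + a (j + 2))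
    (hbdd : BddAbove (Set.range a)) : Antitone a := by
  have hdiff : Monotone fun j => a (j + 1) - a j :=
    monotone_nat_of_le_succ fun j => by linarith [hconv j]
  refine antitone_nat_of_succ_le fun i => ?_
  by_contra! hlt
  have hgrow (j : ℕ) : a i + j * (a (i + 1) - a i) ≤ a (i + j) := by
    induction j with
    | zero => simp
    | succ j ih =>
      have hstep : a (i + 1) - a i ≤ a (i + j + 1) - a (i + j) := hdiff (Nat.le_add_right i j)
      push_cast
      rw [← add_assoc i]
      linarith
  obtain ⟨b, hb⟩ := hbdd
  obtain ⟨j, hj⟩ := exists_nat_gt ((b - a i) / (a (i + 1) - a i))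
  rw [div_lt_iff₀ (sub_pos.2 hlt)] at hj
  linarith [hgrow j, hb (Set.mem_range_self (i + j))]

lemma nonneg_of_forall_nat_mul_add_nonneg {a b : ℝ} (h : ∀ N : ℕ, 0 ≤ N * a + b) : 0 ≤ a := by
  by_contra! ha
  obtain ⟨N, hN⟩ := exists_nat_gt (b / -a)
  rw [div_lt_iff₀ (neg_pos.2 ha)] at hN
  linarith [h N]

section Functional

variable {E : Type*} [CommRing E] {T : Subsemiring E} (hsq : ∀ a, a * a ∈ T)

include hsq

/-- The moments of `v²` form a convex sequence, bounded by `L u`. -/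
lemma map_mul_self_le_map_one {L : E →+ ℝ} (hL : ∀ t ∈ T, 0 ≤ L t) {u v : E} (hu : u - 1 ∈ T)
    (huv : u * (1 - v * v) ∈ T) : L (v * v) ≤ L 1 := by
  have hpow (j : ℕ) : (v * v) ^ j ∈ T := pow_mem (hsq v) j
  have hconv (j : ℕ) :
      2 * L ((v * v) ^ (j + 1)) ≤ L ((v * v) ^ j) + L ((v * v) ^ (j + 2)) := by
    have h := hL _ (mul_mem (hpow j) (hsq (1 - v * v)))
    have hexp : (v * v) ^ j * ((1 - v * v) * (1 - v * v)) =
        (v * v) ^ j + (v * v) ^ (j + 2) - ((v * v) ^ (j + 1) + (v * v) ^ (j + 1)) := by ring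
    rw [hexp, map_sub, map_add, map_add] at h
    linarith
  have hbound (j : ℕ) : L ((v * v) ^ j) ≤ L u := by
    have hgeom : u * (1 - (v * v) ^ j) ∈ T := by
      rw [← mul_neg_geom_sum, ← mul_assoc]
      exact mul_mem huv (sum_mem fun i _ => hpow i)
    have hsplit : u - (v * v) ^ j = (u - 1) * (v * v) ^ j + u * (1 - (v * v) ^ j) := by ring
    rw [← sub_nonneg, ← map_sub, hsplit]
    exact hL _ (add_mem (mul_mem hu (hpow j)) hgeom)
  have h := antitone_of_convex_of_bddAbove hconv ⟨L u, Set.forall_mem_range.2 hbound⟩ zero_le_one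
  simpa using h

/-- With `v = 1 - a` the moment bound reads `2 L a ≥ L (a²) ≥ 0`. -/
lemma map_nonneg_of_mul_mul_two_sub_mem {L : E →+ ℝ} (hL : ∀ t ∈ T, 0 ≤ L t) {u a : E}
    (hu : u - 1 ∈ T) (ha : u * (a * (2 - a)) ∈ T) : 0 ≤ L a := by
  have hv : u * (1 - (1 - a) * (1 - a)) = u * (a * (2 - a)) := by ring
  have h := map_mul_self_le_map_one hsq hL hu (hv ▸ ha)
  have hexp : (1 - a) * (1 - a) = 1 - (a + a) + a * a := by ring
  rw [hexp, map_add, map_sub, map_add] at h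
  linarith [hL _ (hsq a)]

/-- The certificates `s * a = 1 + t` and `s' * (2 z² - a) = 1 + t'` express `0 < a < 2 z²`. -/
lemma map_nonneg_of_certificates {L : E →+ ℝ} (hL : ∀ t ∈ T, 0 ≤ L t) {a z s t s' t' : E}
    (hz : IsUnit z) (hs : s ∈ T) (ht : t ∈ T) (hst : s * a = 1 + t) (hs' : s' ∈ T) (ht' : t' ∈ T)
    (hst' : s' * (2 * (z * z) - a) = 1 + t') : 0 ≤ L a := by
  obtain ⟨w, hw⟩ := hz.exists_left_inv
  have hLz : ∀ x ∈ T, 0 ≤ L.comp (AddMonoidHom.mulLeft (z * z)) x := fun x hx =>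
    hL _ (mul_mem (hsq z) hx)
  have hu : (1 + t) * (1 + t') - 1 ∈ T := by
    have hexp : (1 + t) * (1 + t') - 1 = t + t' + t * t' := by ring
    exact hexp ▸ add_mem (add_mem ht ht') (mul_mem ht ht')
  have hua : (1 + t) * (1 + t') * (a * (w * w) * (2 - a * (w * w))) ∈ T := by
    have htwo : 2 - a * (w * w) = (2 * (z * z) - a) * (w * w) := by
      linear_combination (-2 * (w * z + 1)) * hw
    have hprod : (1 + t) * (1 + t') * (a * (w * w) * (2 - a * (w * w))) =
        s * s' * (a * (2 * (z * z) - a) * (w * w) * (a * (2 * (z * z) - a) * (w * w))) := by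
      rw [htwo, ← hst, ← hst']
      ring
    exact hprod ▸ mul_mem (mul_mem hs hs') (hsq _)
  have h := map_nonneg_of_mul_mul_two_sub_mem hsq hLz hu hua
  have hcancel : z * z * (a * (w * w)) = a := by linear_combination a * (w * z + 1) * hw
  simpa [hcancel] using h

end Functional

section Certificate

variable {σ : Type} [Finite σ] {κ : Type*} [Finite κ] {g : κ → MvPolynomial σ ℝ}

lemma exists_mul_eq_one_add_of_forall_pos {T : Subsemiring (MvPolynomial σ ℝ)}
    (hsq : ∀ a, a * a ∈ T) (hg : ∀ k, g k ∈ T) {f : MvPolynomial σ ℝ}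
    (hf : ∀ x, (∀ k, 0 ≤ eval x (g k)) → 0 < eval x f) : ∃ s ∈ T, ∃ t ∈ T, s * f = 1 + t := by
  by_cases hT : -1 ∈ T
  · exact ⟨0, zero_mem T, -1, hT, by ring⟩
  let P : RingPreordering (MvPolynomial σ ℝ) :=
    { T with
      mem_of_isSquare' := by rintro _ ⟨a, rfl⟩; exact hsq a
      neg_one_notMem' := hT }
  have hneg : -1 ∈ adjoinPreordering P (-f) := by
    by_contra hQ
    have hle {a} (ha : a ∈ P) : a ∈ adjoinPreordering P (-f) := ⟨a, ha, 0, zero_mem P, by simp⟩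
    let Q : RingPreordering (MvPolynomial σ ℝ) :=
      { adjoinPreordering P (-f) with
        mem_of_isSquare' := fun ha => hle (P.mem_of_isSquare ha)
        neg_one_notMem' := hQ }
    have hmem (o : Option κ) : o.elim (-f) g ∈ Q := by
      cases o with
      | none => exact ⟨0, zero_mem P, 1, one_mem P, by simp⟩
      | some k => exact hle (hg k)
    obtain ⟨y, hy⟩ := exists_forall_eval_nonneg_of_preordering Q hmem
    have hfy : 0 ≤ eval y (-f) := hy none
    rw [map_neg, neg_nonneg] at hfy
    exact hfy.not_gt (hf y fun k => hy (some k))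
  obtain ⟨t, ht, s, hs, h⟩ := hneg
  exact ⟨s, hs, t, ht, by linear_combination h⟩

variable {K : Set (σ → ℝ)} (hK : ∀ x, (∀ k, 0 ≤ eval x (g k)) → x ∈ K) {E : Type*} [CommRing E]
  {φ : MvPolynomial σ ℝ →+* E} {T : Subsemiring E} (hsq : ∀ a, a * a ∈ T) (hg : ∀ k, φ (g k) ∈ T)

include hK hsq hg

lemma map_nonneg_of_forall_pos {z : MvPolynomial σ ℝ} (hz : IsUnit (φ z))
    (hz1 : ∀ x ∈ K, 1 ≤ eval x z) {f : MvPolynomial σ ℝ} (hf : ∀ x ∈ K, 0 < eval x f)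
    (hfz : ∀ x ∈ K, eval x f ≤ eval x z) {L : E →+ ℝ} (hL : ∀ t ∈ T, 0 ≤ L t) :
    0 ≤ L (φ f) := by
  have hsq' (a : MvPolynomial σ ℝ) : a * a ∈ T.comap φ := by
    rw [Subsemiring.mem_comap, map_mul]
    exact hsq _
  have hpos (x : σ → ℝ) (hx : x ∈ K) : 0 < eval x (2 * (z * z) - f) := by
    simp only [map_sub, map_mul, map_ofNat]
    nlinarith [hz1 x hx, hfz x hx]
  obtain ⟨s, hs, t, ht, hst⟩ :=
    exists_mul_eq_one_add_of_forall_pos hsq' hg fun x hx => hf x (hK x hx)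
  obtain ⟨s', hs', t', ht', hst'⟩ :=
    exists_mul_eq_one_add_of_forall_pos hsq' hg fun x hx => hpos x (hK x hx)
  refine map_nonneg_of_certificates hsq hL hz hs ht ?_ hs' ht' ?_
  · simpa using congrArg φ hst
  · simpa only [map_mul, map_sub, map_ofNat, map_add, map_one] using congrArg φ hst'

lemma map_mul_mul_self_nonneg_of_forall_nonneg
    (hdom : ∀ f, ∃ z, IsUnit (φ z) ∧ ∀ x ∈ K, 1 ≤ eval x z ∧ eval x f ≤ eval x z)
    {f : MvPolynomial σ ℝ} (hf : ∀ x ∈ K, 0 ≤ eval x f) {L : E →+ ℝ} (hL : ∀ t ∈ T, 0 ≤ L t)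
    (e : E) : 0 ≤ L (φ f * (e * e)) := by
  refine nonneg_of_forall_nat_mul_add_nonneg (b := L (e * e)) fun N => ?_
  obtain ⟨z, hz, hzK⟩ := hdom (N • f + 1)
  have hpos (x : σ → ℝ) (hx : x ∈ K) : 0 < eval x (N • f + 1) := by
    rw [map_add, map_one, map_nsmul]
    exact add_pos_of_nonneg_of_pos (nsmul_nonneg (hf x hx) N) one_pos
  have h := map_nonneg_of_forall_pos hK hsq hg hz (fun x hx => (hzK x hx).1) hpos
    (fun x hx => (hzK x hx).2) (L := L.comp (AddMonoidHom.mulRight (e * e)))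
    fun t ht => hL _ (mul_mem ht (hsq e))
  simpa [add_mul, mul_assoc, ← nsmul_eq_mul] using h

end Certificate

section Growth

variable {σ : Type*} {K : Set (σ → ℝ)} {p : MvPolynomial σ ℝ}

lemma exists_abs_eval_le_mul_pow (hp : ∀ x ∈ K, 1 ≤ eval x p) {k : ℝ}
    (hX : ∀ x ∈ K, ∀ i, |x i| ≤ k * eval x p) (f : MvPolynomial σ ℝ) :
    ∃ (c : ℝ) (M : ℕ), 0 ≤ c ∧ ∀ x ∈ K, |eval x f| ≤ c * eval x p ^ M := by
  induction f using MvPolynomial.induction_on with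
  | C r => exact ⟨|r|, 0, abs_nonneg r, by simp⟩
  | add f h hf hh =>
    obtain ⟨c, M, hc, hf⟩ := hf
    obtain ⟨d, N, hd, hh⟩ := hh
    refine ⟨c + d, M + N, by positivity, fun x hx => ?_⟩
    have hpx := hp x hx
    calc |eval x (f + h)| ≤ |eval x f| + |eval x h| := by rw [map_add]; exact abs_add_le _ _
      _ ≤ c * eval x p ^ M + d * eval x p ^ N := add_le_add (hf x hx) (hh x hx)
      _ ≤ c * eval x p ^ (M + N) + d * eval x p ^ (M + N) := by gcongr <;> first | exact hpx | omega
      _ = (c + d) * eval x p ^ (M + N) := by ring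
  | mul_X f i hf =>
    obtain ⟨c, M, hc, hf⟩ := hf
    refine ⟨c * |k|, M + 1, by positivity, fun x hx => ?_⟩
    have hpx : 0 ≤ eval x p := zero_le_one.trans (hp x hx)
    calc |eval x (f * X i)| = |eval x f| * |x i| := by rw [map_mul, eval_X, abs_mul]
      _ ≤ (c * eval x p ^ M) * (k * eval x p) := by
        gcongr
        exacts [hf x hx, hX x hx i]
      _ ≤ (c * eval x p ^ M) * (|k| * eval x p) := by gcongr; exact le_abs_self k
      _ = c * |k| * eval x p ^ (M + 1) := by ring

lemma exists_isUnit_map_eval_le {E : Type*} [CommRing E] {φ : MvPolynomial σ ℝ →+* E}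
    (hpu : IsUnit (φ p)) (hp : ∀ x ∈ K, 1 ≤ eval x p) {k : ℝ}
    (hX : ∀ x ∈ K, ∀ i, |x i| ≤ k * eval x p) (f : MvPolynomial σ ℝ) :
    ∃ z, IsUnit (φ z) ∧ ∀ x ∈ K, 1 ≤ eval x z ∧ eval x f ≤ eval x z := by
  obtain ⟨c, M, hc, hf⟩ := exists_abs_eval_le_mul_pow hp hX f
  have hc1 : IsUnit (1 + c) := isUnit_iff_ne_zero.2 (by positivity)
  refine ⟨C (1 + c) * p ^ M, ?_, fun x hx => ?_⟩
  · rw [map_mul, map_pow]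
    exact ((hc1.map C).map φ).mul (hpu.pow M)
  · have hpow : 1 ≤ eval x p ^ M := one_le_pow₀ (hp x hx)
    rw [map_mul, eval_C, map_pow]
    refine ⟨one_le_mul_of_one_le_of_one_le (by linarith) hpow, ?_⟩
    linarith [(le_abs_self _).trans (hf x hx)]

end Growth

/-! ### The representing measure -/

section RepresentingMeasure

open CompactlySupported

variable {σ : Type*} {E : Type*} [CommRing E] [Algebra ℝ E] {φ : MvPolynomial σ ℝ →ₐ[ℝ] E}
  {D : Submonoid (MvPolynomial σ ℝ)} {K : Set (σ → ℝ)}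

/-- Positivity of a functional on the weighted squares `f e²` with `f` nonnegative on `K`. -/
def PositiveOn (φ : MvPolynomial σ ℝ →ₐ[ℝ] E) (K : Set (σ → ℝ)) (L : E →ₗ[ℝ] ℝ) : Prop :=
  ∀ f, (∀ x ∈ K, 0 ≤ eval x f) → ∀ e, 0 ≤ L (φ f * (e * e))

lemma PositiveOn.comp_mulRight_mul_self {L : E →ₗ[ℝ] ℝ} (hL : PositiveOn φ K L) (a : E) :
    PositiveOn φ K (L ∘ₗ LinearMap.mulRight ℝ (a * a)) := fun f hf e => by
  rw [LinearMap.comp_apply, LinearMap.mulRight_apply, mul_assoc, mul_mul_mul_comm]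
  exact hL f hf (e * a)

/-- Pointwise domination `ψ ≤ e` on `K`, where the element `e` is represented by a fraction `h / d²`
with `d ∈ D`; clearing the denominator makes sense of it at the zeros of `d`. -/
def Dominates (φ : MvPolynomial σ ℝ →ₐ[ℝ] E) (D : Submonoid (MvPolynomial σ ℝ))
    (K : Set (σ → ℝ)) (e : E) (ψ : C_c(σ → ℝ, ℝ)) : Prop :=
  ∃ h, ∃ d ∈ D, φ h = φ d * φ d * e ∧ ∀ x ∈ K, ψ x * eval x d ^ 2 ≤ eval x h

namespace Dominates

lemma of_le {h : MvPolynomial σ ℝ} {ψ : C_c(σ → ℝ, ℝ)} (hψ : ∀ x ∈ K, ψ x ≤ eval x h) :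
    Dominates φ D K (φ h) ψ :=
  ⟨h, 1, one_mem D, by simp, by simpa using hψ⟩

lemma add {e₁ e₂ : E} {ψ₁ ψ₂ : C_c(σ → ℝ, ℝ)} (h₁ : Dominates φ D K e₁ ψ₁)
    (h₂ : Dominates φ D K e₂ ψ₂) : Dominates φ D K (e₁ + e₂) (ψ₁ + ψ₂) := by
  obtain ⟨a₁, d₁, hd₁, he₁, hK₁⟩ := h₁
  obtain ⟨a₂, d₂, hd₂, he₂, hK₂⟩ := h₂
  refine ⟨a₁ * d₂ ^ 2 + a₂ * d₁ ^ 2, d₁ * d₂, mul_mem hd₁ hd₂, ?_, fun x hx => ?_⟩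
  · simp only [map_add, map_mul, map_pow, he₁, he₂]
    ring
  · simp only [map_add, map_mul, map_pow, CompactlySupportedContinuousMap.coe_add, Pi.add_apply]
    calc (ψ₁ x + ψ₂ x) * (eval x d₁ * eval x d₂) ^ 2
        = ψ₁ x * eval x d₁ ^ 2 * eval x d₂ ^ 2 + ψ₂ x * eval x d₂ ^ 2 * eval x d₁ ^ 2 := by ring
      _ ≤ _ := add_le_add (mul_le_mul_of_nonneg_right (hK₁ x hx) (sq_nonneg _))
        (mul_le_mul_of_nonneg_right (hK₂ x hx) (sq_nonneg _))

lemma smul {e : E} {ψ : C_c(σ → ℝ, ℝ)} (h : Dominates φ D K e ψ) {c : ℝ} (hc : 0 ≤ c) :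
    Dominates φ D K (c • e) (c • ψ) := by
  obtain ⟨a, d, hd, he, hK⟩ := h
  refine ⟨c • a, d, hd, by rw [map_smul, he, mul_smul_comm], fun x hx => ?_⟩
  rw [smul_eval, CompactlySupportedContinuousMap.smul_apply, smul_eq_mul, mul_assoc]
  exact mul_le_mul_of_nonneg_left (hK x hx) hc

/-- Where `ψ = 0` the cleared inequality `ψ d² ≤ δ²` is trivial, so `d` need only be small
elsewhere. -/
lemma of_abs_eval_le {d : MvPolynomial σ ℝ} (hd : d ∈ D) {u : Eˣ} (hu : (u : E) = φ d)
    {ψ : C_c(σ → ℝ, ℝ)} (hψ : ∀ x, ψ x ≤ 1) {δ : ℝ} (hδ : ∀ x, ψ x ≠ 0 → |eval x d| ≤ δ) :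
    Dominates φ D K (δ ^ 2 • ((↑u⁻¹ : E) * ↑u⁻¹)) ψ := by
  refine ⟨C (δ ^ 2), d, hd, ?_, fun x _ => ?_⟩
  · rw [MvPolynomial.algHom_C, ← hu, mul_smul_comm, mul_mul_mul_comm, u.mul_inv, mul_one,
      Algebra.algebraMap_eq_smul_one]
  · rw [eval_C]
    by_cases hx : ψ x = 0
    · rw [hx, zero_mul]
      positivity
    · calc ψ x * eval x d ^ 2 ≤ 1 * eval x d ^ 2 := by gcongr; exact hψ x
        _ ≤ δ ^ 2 := by
          rw [one_mul, ← sq_abs]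
          gcongr
          exact hδ x hx

lemma nonneg_of_zero (hDu : ∀ d ∈ D, IsUnit (φ d)) {L : E →ₗ[ℝ] ℝ} (hL : PositiveOn φ K L) {e : E}
    (he : Dominates φ D K e 0) : 0 ≤ L e := by
  obtain ⟨h, d, hd, he, hK⟩ := he
  obtain ⟨u, hu⟩ := hDu d hd
  have hcancel : φ h * (↑u⁻¹ * ↑u⁻¹) = e := by
    rw [he, ← hu]
    linear_combination e * ((u : E) * ↑u⁻¹ + 1) * u.mul_inv
  rw [← hcancel]
  exact hL h (fun x hx => by simpa using hK x hx) _

end Dominates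

lemma exists_dominates_algebraMap (ψ : C_c(σ → ℝ, ℝ)) :
    ∃ c : ℝ, Dominates φ D K (algebraMap ℝ E c) ψ := by
  obtain ⟨c, hc⟩ := ψ.continuous.bounded_above_of_compact_support ψ.hasCompactSupport
  refine ⟨c, ?_⟩
  rw [← MvPolynomial.algHom_C φ]
  exact Dominates.of_le fun x _ => by simpa using (le_abs_self _).trans (hc x)

/-- The convex cone of the pairs `(e, ψ)` with `e + ψ ≥ 0` on `K`. -/
def dominationCone (φ : MvPolynomial σ ℝ →ₐ[ℝ] E) (D : Submonoid (MvPolynomial σ ℝ))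
    (K : Set (σ → ℝ)) : PointedCone ℝ (E × C_c(σ → ℝ, ℝ)) where
  carrier := {y | Dominates φ D K y.1 (-y.2)}
  zero_mem' := ⟨0, 1, one_mem D, by simp, by simp⟩
  add_mem' {a b} ha hb := by
    simpa only [Set.mem_ofPred_eq, Prod.fst_add, Prod.snd_add, neg_add] using Dominates.add ha hb
  smul_mem' c a ha := by
    have hneg : (c : ℝ) • -a.2 = -((c : ℝ) • a.2) := by ext; simp
    have h := Dominates.smul ha c.2
    rw [hneg] at h
    exact h

lemma exists_extension_le_of_dominates (hDu : ∀ d ∈ D, IsUnit (φ d)) {L : E →ₗ[ℝ] ℝ}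
    (hL : PositiveOn φ K L) :
    ∃ Λ : C_c(σ → ℝ, ℝ) →ₗ[ℝ] ℝ, ∀ e ψ, Dominates φ D K e ψ → Λ ψ ≤ L e := by
  let f : (E × C_c(σ → ℝ, ℝ)) →ₗ.[ℝ] ℝ :=
    { domain := Submodule.prod ⊤ ⊥
      toFun := (L ∘ₗ LinearMap.fst ℝ _ _) ∘ₗ Submodule.subtype _ }
  have hdom (e : E) : (e, 0) ∈ f.domain := ⟨Submodule.mem_top, Submodule.zero_mem _⟩
  have hnonneg : ∀ y : f.domain, (y : E × C_c(σ → ℝ, ℝ)) ∈ dominationCone φ D K → 0 ≤ f y := by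
    rintro ⟨⟨e, ψ⟩, -, rfl : ψ = 0⟩ (he : Dominates φ D K e (-0))
    rw [neg_zero] at he
    exact he.nonneg_of_zero hDu hL
  have hdense (y) : ∃ x : f.domain, (x : E × C_c(σ → ℝ, ℝ)) + y ∈ dominationCone φ D K := by
    obtain ⟨e, ψ⟩ := y
    obtain ⟨c, hc⟩ := exists_dominates_algebraMap (φ := φ) (D := D) (K := K) (-ψ)
    refine ⟨⟨(algebraMap ℝ E c - e, 0), hdom _⟩, ?_⟩
    rw [Prod.mk_add_mk, sub_add_cancel, zero_add]
    exact hc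
  obtain ⟨G, hG, hGs⟩ := riesz_extension (dominationCone φ D K) f hnonneg hdense
  refine ⟨G ∘ₗ LinearMap.inr ℝ _ _, fun e ψ h => ?_⟩
  have hmem : (e, -ψ) ∈ dominationCone φ D K := by
    change Dominates φ D K e (- -ψ)
    rwa [neg_neg]
  have hsplit : (e, -ψ) = (e, 0) - LinearMap.inr ℝ E C_c(σ → ℝ, ℝ) ψ := by simp
  have hGe : G (e, 0) = L e := hG ⟨(e, 0), hdom e⟩
  have h0 := hGs _ hmem
  rw [hsplit, map_sub, hGe, sub_nonneg] at h0
  exact h0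

lemma exists_measure_integral_le_of_dominates [Finite σ] (hDu : ∀ d ∈ D, IsUnit (φ d))
    {L : E →ₗ[ℝ] ℝ} (hL : PositiveOn φ K L) :
    ∃ μ : Measure (σ → ℝ), IsLocallyFiniteMeasure μ ∧
      ∀ e ψ, Dominates φ D K e ψ → ∫ x, ψ x ∂μ ≤ L e := by
  obtain ⟨Λ, hΛ⟩ := exists_extension_le_of_dominates hDu hL
  let Λ' : C_c(σ → ℝ, ℝ) →ₚ[ℝ] ℝ := PositiveLinearMap.mk₀ Λ fun ψ hψ => by
    have h := hΛ 0 (-ψ) (map_zero φ ▸ Dominates.of_le fun x _ => by simpa using hψ x)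
    simpa using h
  refine ⟨RealRMK.rieszMeasure Λ', inferInstance, fun e ψ h => ?_⟩
  rw [RealRMK.integral_rieszMeasure]
  exact hΛ e ψ h

end RepresentingMeasure

/-! ### Null sets -/

section NullSet

open Metric Filter CompactlySupported
open scoped Topology NNReal ENNReal

section Urysohn

variable {X : Type*} [TopologicalSpace X]

lemma exists_compactlySupported_one_zero [RegularSpace X] [LocallyCompactSpace X] {s t : Set X}
    (hs : IsCompact s) (ht : IsClosed t) (hd : Disjoint s t) :
    ∃ ψ : C_c(X, ℝ), (∀ x, 0 ≤ ψ x) ∧ (∀ x, ψ x ≤ 1) ∧ (∀ x ∈ s, ψ x = 1) ∧ ∀ x ∈ t, ψ x = 0 := by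
  obtain ⟨f, hfs, hft, hf, hI⟩ := exists_continuous_one_zero_of_isCompact hs ht hd
  exact ⟨⟨f, hf⟩, fun x => (hI x).1, fun x => (hI x).2, hfs, hft⟩

lemma measure_le_ofReal_integral [MeasurableSpace X] [OpensMeasurableSpace X]
    {μ : Measure X} [IsFiniteMeasureOnCompacts μ] {ψ : C_c(X, ℝ)} (h0 : ∀ x, 0 ≤ ψ x) {s : Set X}
    (h1 : ∀ x ∈ s, ψ x = 1) : μ s ≤ ENNReal.ofReal (∫ x, ψ x ∂μ) :=
  (ψ.continuous.integrable_of_hasCompactSupport ψ.hasCompactSupport).measure_le_integral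
    (ae_of_all _ h0) fun x hx => (h1 x hx).ge

end Urysohn

lemma measure_null_of_eventually_closedBall_le {α : Type*} [MetricSpace α]
    [SecondCountableTopology α] [HasBesicovitchCovering α] [MeasurableSpace α] [BorelSpace α]
    (μ ν : Measure α) [IsLocallyFiniteMeasure μ] [IsLocallyFiniteMeasure ν] {Y : Set α}
    (hY : ∀ a ∈ Y, ∀ ε : ℝ≥0, 0 < ε →
      ∀ᶠ r in 𝓝[>] 0, μ (closedBall a r) ≤ ε * ν (closedBall a r)) :
    μ Y = 0 := by
  have hle {ε : ℝ≥0} (hε : 0 < ε) (s : Set α) (hs : s ⊆ Y) : μ s ≤ ε * ν s :=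
    (Besicovitch.vitaliFamily μ).measure_le_of_frequently_le (ε • ν) .rfl s fun x hx =>
      (Besicovitch.tendsto_filterAt μ x).frequently (hY x (hs hx) ε hε).frequently
  refine measure_null_of_locally_null Y fun a _ => ?_
  obtain ⟨U, haU, hU, hνU⟩ := ν.exists_isOpen_measure_lt_top a
  refine ⟨Y ∩ U, inter_mem_nhdsWithin _ (hU.mem_nhds haU), ?_⟩
  have hν : ν (Y ∩ U) ≠ ∞ := measure_ne_top_of_subset Set.inter_subset_right hνU.ne
  have hlim : Tendsto (fun ε : ℝ≥0 => ε * ν (Y ∩ U)) (𝓝[>] 0) (𝓝 0) := by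
    have h : Tendsto (fun ε : ℝ≥0 => (ε : ℝ≥0∞)) (𝓝[>] 0) (𝓝 0) :=
      (ENNReal.tendsto_coe.2 tendsto_id).mono_left nhdsWithin_le_nhds
    simpa using ENNReal.Tendsto.mul_const h (.inr hν)
  exact le_antisymm
    (ge_of_tendsto hlim (eventually_mem_nhdsWithin.mono fun ε hε => hle hε _ Set.inter_subset_left))
    zero_le

lemma measure_null_of_eventually_closedBall_le_pow {ι : Type*} [Fintype ι] (μ : Measure (ι → ℝ))
    [IsLocallyFiniteMeasure μ] {Y : Set (ι → ℝ)} {q : ℕ} (hq : Fintype.card ι < q)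
    (hY : ∀ a ∈ Y, ∃ c : ℝ, ∀ᶠ r in 𝓝[>] 0, μ (closedBall a r) ≤ ENNReal.ofReal (c * r ^ q)) :
    μ Y = 0 := by
  refine measure_null_of_eventually_closedBall_le μ volume fun a ha ε hε => ?_
  obtain ⟨c, hc⟩ := hY a ha
  have hlittle := ((Asymptotics.isLittleO_pow_pow hq).const_mul_left c).def (NNReal.coe_pos.2 hε)
  filter_upwards [hc, hlittle.filter_mono nhdsWithin_le_nhds, self_mem_nhdsWithin]
    with r hμ hpow (hr : 0 < r)
  rw [Real.volume_pi_closedBall _ hr.le, ← ENNReal.ofReal_coe_nnreal,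
    ← ENNReal.ofReal_mul ε.coe_nonneg]
  refine hμ.trans (ENNReal.ofReal_le_ofReal ?_)
  calc c * r ^ q ≤ ε * ‖r ^ Fintype.card ι‖ := (Real.le_norm_self _).trans hpow
    _ = ε * r ^ Fintype.card ι := by rw [Real.norm_of_nonneg (by positivity)]
    _ ≤ ε * (2 * r) ^ Fintype.card ι := by gcongr; linarith

lemma eventually_abs_eval_sub_le {σ : Type*} [Fintype σ] (f : MvPolynomial σ ℝ) (a : σ → ℝ) :
    ∃ M : ℝ, 0 < M ∧ ∀ᶠ x in 𝓝 a, |eval x f - eval a f| ≤ M * dist x a := by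
  have hf : DifferentiableAt ℝ (fun x => eval x f) a :=
    (AnalyticOnNhd.eval_mvPolynomial f a (Set.mem_univ a)).differentiableAt
  obtain ⟨M, hM, h⟩ := hf.isBigO_sub.exists_pos
  exact ⟨M, hM, h.bound.mono fun x hx => by rwa [dist_eq_norm]⟩

end NullSet

section OffZeros

open Metric Filter CompactlySupported
open scoped Topology

variable {σ : Type*} {E : Type*} [CommRing E] [Algebra ℝ E]
  {φ : MvPolynomial σ ℝ →ₐ[ℝ] E} {D : Submonoid (MvPolynomial σ ℝ)} {K : Set (σ → ℝ)}
  {L : E →ₗ[ℝ] ℝ} {μ : Measure (σ → ℝ)} [IsLocallyFiniteMeasure μ]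
  (hμ : ∀ e ψ, Dominates φ D K e ψ → ∫ x, ψ x ∂μ ≤ L e)

include hμ

lemma measure_compl_eq_zero_of_dominates [Finite σ] (hK : IsClosed K) : μ Kᶜ = 0 := by
  refine measure_null_of_locally_null _ fun a ha => ?_
  obtain ⟨B, hB, haB, hBK⟩ := exists_compact_subset hK.isOpen_compl ha
  refine ⟨B, mem_nhdsWithin_of_mem_nhds (mem_interior_iff_mem_nhds.1 haB), ?_⟩
  obtain ⟨ψ, hψ0, -, hψB, hψK⟩ :=
    exists_compactlySupported_one_zero hB hK (Set.disjoint_left.2 hBK)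
  have hdom : Dominates φ D K 0 ψ := map_zero φ ▸ Dominates.of_le fun x hx => by
    rw [hψK x hx, map_zero]
  have h := hμ 0 ψ hdom
  rw [map_zero] at h
  exact le_antisymm ((measure_le_ofReal_integral hψ0 hψB).trans_eq (ENNReal.ofReal_of_nonpos h))
    zero_le

/-- The ball is compared with `(2Mr)²ᴺ / d²ᴺ`,
where `M` is a Lipschitz constant of `d` at `a`. -/
lemma eventually_measure_closedBall_le [Fintype σ] {d : MvPolynomial σ ℝ} (hd : d ∈ D)
    (hdu : IsUnit (φ d)) {a : σ → ℝ} (ha : eval a d = 0) (N : ℕ) :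
    ∃ c : ℝ, ∀ᶠ r in 𝓝[>] 0, μ (closedBall a r) ≤ ENNReal.ofReal (c * r ^ (N * 2)) := by
  obtain ⟨M, hM, hlip⟩ := eventually_abs_eval_sub_le d a
  obtain ⟨η, hη, hball⟩ := Metric.eventually_nhds_iff_ball.1 hlip
  obtain ⟨u, hu⟩ := hdu.pow N
  refine ⟨(2 * M) ^ (N * 2) * L (↑u⁻¹ * ↑u⁻¹), ?_⟩
  filter_upwards [Ioo_mem_nhdsGT (half_pos hη)] with r hr
  obtain ⟨hr0 : 0 < r, hrη : r < η / 2⟩ := hr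
  obtain ⟨ψ, hψ0, hψ1, hψB, hψZ⟩ := exists_compactlySupported_one_zero (isCompact_closedBall a r)
    isOpen_ball.isClosed_compl
    (Set.disjoint_compl_right_iff_subset.2 (closedBall_subset_ball (by linarith : r < 2 * r)))
  have hsmall (x : σ → ℝ) (hx : ψ x ≠ 0) : |eval x (d ^ N)| ≤ (2 * M * r) ^ N := by
    have hxa : dist x a < 2 * r := not_imp_comm.1 (hψZ x) hx
    have h := hball x (mem_ball.2 (by linarith))
    rw [ha, sub_zero] at h
    rw [map_pow, abs_pow]
    gcongr
    nlinarith
  have hdom : Dominates φ D K (((2 * M * r) ^ N) ^ 2 • (↑u⁻¹ * ↑u⁻¹ : E)) ψ :=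
    .of_abs_eval_le (pow_mem hd N) (by rw [hu, map_pow]) hψ1 hsmall
  refine (measure_le_ofReal_integral hψ0 hψB).trans (ENNReal.ofReal_le_ofReal ?_)
  calc ∫ x, ψ x ∂μ ≤ L (((2 * M * r) ^ N) ^ 2 • (↑u⁻¹ * ↑u⁻¹ : E)) := hμ _ _ hdom
    _ = (2 * M) ^ (N * 2) * L (↑u⁻¹ * ↑u⁻¹) * r ^ (N * 2) := by
      rw [map_smul, smul_eq_mul]
      ring

lemma measure_setOf_eval_eq_zero_of_dominates [Finite σ] (hDu : ∀ d ∈ D, IsUnit (φ d)) :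
    μ {x | ∃ d ∈ D, eval x d = 0} = 0 := by
  have := Fintype.ofFinite σ
  have hq : Fintype.card σ < (Fintype.card σ + 1) * 2 := by omega
  refine measure_null_of_eventually_closedBall_le_pow μ hq ?_
  rintro a ⟨d, hd, ha⟩
  exact eventually_measure_closedBall_le hμ hd (hDu d hd) ha _

omit hμ

lemma norm_le_one_add_sum_sq [Fintype σ] (x : σ → ℝ) : ‖x‖ ≤ 1 + ∑ i, x i ^ 2 := by
  refine (pi_norm_le_iff_of_nonneg (by positivity)).2 fun i => ?_
  have hi : x i ^ 2 ≤ ∑ i, x i ^ 2 :=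
    Finset.single_le_sum (fun i _ => sq_nonneg (x i)) (Finset.mem_univ i)
  rw [Real.norm_eq_abs]
  nlinarith [sq_abs (x i), sq_nonneg (|x i| - 1)]

/-- The error term `R⁻¹ (1 + f²) (1 + ∑ xᵢ²)` pays for the truncation of `f`, since `R ≤ 1 + ∑ xᵢ²`
where `ψ` is not `1`. -/
lemma exists_cutoff_dominates [Fintype σ] (f : MvPolynomial σ ℝ) {R : ℝ} (hR : 0 < R) :
    ∃ χ : C_c(σ → ℝ, ℝ), (∀ x, 0 ≤ eval x f → 0 ≤ χ x) ∧
      Dominates φ D K (φ (f + R⁻¹ • ((1 + f ^ 2) * (1 + ∑ i, X i ^ 2)))) χ := by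
  obtain ⟨ψ, hψ0, hψ1, hψB, -⟩ := exists_compactlySupported_one_zero
    (isCompact_closedBall (0 : σ → ℝ) R) isClosed_empty (Set.disjoint_empty _)
  refine ⟨⟨⟨fun x => eval x f * ψ x, f.continuous_eval.mul ψ.continuous⟩,
    ψ.hasCompactSupport.mul_left⟩, fun x hx => mul_nonneg hx (hψ0 x), .of_le fun x _ => ?_⟩
  change eval x f * ψ x ≤ _
  simp only [map_add, map_mul, map_pow, map_sum, map_one, smul_eval, eval_X]
  by_cases hx : ‖x‖ ≤ R
  · rw [hψB x (mem_closedBall_zero_iff.2 hx), mul_one]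
    exact le_add_of_nonneg_right (by positivity)
  · have herr : 1 ≤ R⁻¹ * (1 + ∑ i, x i ^ 2) := by
      rw [inv_mul_eq_div, one_le_div hR]
      exact (not_le.1 hx).le.trans (norm_le_one_add_sum_sq x)
    calc eval x f * ψ x ≤ |eval x f| * 1 :=
          mul_le_mul (le_abs_self _) (hψ1 x) (hψ0 x) (abs_nonneg _)
      _ ≤ eval x f + (1 + eval x f ^ 2) * 1 := by
          rcases abs_cases (eval x f) with ⟨h, -⟩ | ⟨h, -⟩ <;> rw [h] <;>
            nlinarith [sq_nonneg (eval x f), sq_nonneg (eval x f + 1)]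
      _ ≤ eval x f + (1 + eval x f ^ 2) * (R⁻¹ * (1 + ∑ i, x i ^ 2)) := by gcongr
      _ = _ := by ring

lemma map_nonneg_of_forall_nonneg_off_zeros [Finite σ] (hDu : ∀ d ∈ D, IsUnit (φ d))
    (hK : IsClosed K) (hL : PositiveOn φ K L) {f : MvPolynomial σ ℝ}
    (hf : ∀ x ∈ K, (∀ d ∈ D, eval x d ≠ 0) → 0 ≤ eval x f) : 0 ≤ L (φ f) := by
  have := Fintype.ofFinite σ
  obtain ⟨μ, hμ, hdom⟩ := exists_measure_integral_le_of_dominates hDu hL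
  have hae : ∀ᵐ x ∂μ, 0 ≤ eval x f := by
    filter_upwards [measure_eq_zero_iff_ae_notMem.1 (measure_compl_eq_zero_of_dominates hdom hK),
      measure_eq_zero_iff_ae_notMem.1 (measure_setOf_eval_eq_zero_of_dominates hdom hDu)]
      with x hxK hxD
    exact hf x (not_not.1 hxK) fun d hd h0 => hxD ⟨d, hd, h0⟩
  set q := L (φ ((1 + f ^ 2) * (1 + ∑ i, X i ^ 2))) with hq
  refine nonneg_of_forall_nat_mul_add_nonneg (b := L (φ f) + q) fun N => ?_
  have hR : (0 : ℝ) < N + 1 := N.cast_add_one_pos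
  obtain ⟨χ, hχ, hχf⟩ := exists_cutoff_dominates (φ := φ) (D := D) (K := K) f hR
  have h : 0 ≤ L (φ f) + (N + 1 : ℝ)⁻¹ * q := by
    rw [hq, ← smul_eq_mul, ← map_smul, ← map_smul, ← map_add, ← map_add]
    exact (integral_nonneg_of_ae (hae.mono hχ)).trans (hdom _ _ hχf)
  calc 0 ≤ (N + 1 : ℝ) * (L (φ f) + (N + 1 : ℝ)⁻¹ * q) := mul_nonneg hR.le h
    _ = N * L (φ f) + (L (φ f) + q) := by field_simp; ring

end OffZeros

/-! ### Preorderings in the localization -/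

section GenPreordering

variable {E : Type*} [CommRing E] {m : ℕ}

lemma mul_prod_mem_genPreordering (g : Fin m → E) {s : E} (hs : IsSumSq s) (ν : Fin m → Bool) :
    s * ∏ j, (if ν j then g j else 1) ∈ genPreordering g := by
  refine ⟨Pi.single ν s, fun μ => ?_, ?_⟩
  · obtain rfl | hμ := eq_or_ne μ ν
    · rwa [Pi.single_eq_same]
    · rw [Pi.single_eq_of_ne hμ]
      exact .zero
  · rw [Finset.sum_eq_single_of_mem ν (Finset.mem_univ ν) fun μ _ hμ => by
      rw [Pi.single_eq_of_ne hμ, zero_mul], Pi.single_eq_same]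

/-- The generated preordering as an additive submonoid. -/
def genAddSubmonoid (g : Fin m → E) : AddSubmonoid E where
  carrier := genPreordering g
  zero_mem' := ⟨0, fun _ => .zero, by simp⟩
  add_mem' := by
    rintro _ _ ⟨σ, hσ, rfl⟩ ⟨τ, hτ, rfl⟩
    refine ⟨σ + τ, fun ν => (hσ ν).add (hτ ν), ?_⟩
    simp only [Pi.add_apply, add_mul, Finset.sum_add_distrib]

lemma prod_ite_mul_prod_ite {ι : Type*} [Fintype ι] (g : ι → E) (ν μ : ι → Bool) :
    (∏ j, if ν j then g j else 1) * (∏ j, if μ j then g j else 1)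
      = ((∏ j, if ν j && μ j then g j else 1) * ∏ j, if ν j && μ j then g j else 1)
        * ∏ j, if ν j ^^ μ j then g j else 1 := by
  simp only [← Finset.prod_mul_distrib]
  refine Finset.prod_congr rfl fun j _ => ?_
  cases ν j <;> cases μ j <;> simp

/-- The generated preordering as a subsemiring. -/
def genSubsemiring (g : Fin m → E) : Subsemiring E where
  __ := genAddSubmonoid g
  one_mem' := by
    change (1 : E) ∈ genPreordering g
    simpa using mul_prod_mem_genPreordering g (.mul_self 1) fun _ => false
  mul_mem' := by
    rintro _ _ ⟨σ, hσ, rfl⟩ ⟨τ, hτ, rfl⟩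
    rw [Finset.sum_mul_sum]
    refine AddSubmonoid.sum_mem (genAddSubmonoid g) fun ν _ =>
      AddSubmonoid.sum_mem _ fun μ _ => ?_
    rw [mul_mul_mul_comm, prod_ite_mul_prod_ite, ← mul_assoc]
    exact mul_prod_mem_genPreordering g (((hσ ν).mul (hτ μ)).mul (.mul_self _)) _

lemma mul_self_mem_genSubsemiring (g : Fin m → E) (a : E) : a * a ∈ genSubsemiring g := by
  change a * a ∈ genPreordering g
  simpa using mul_prod_mem_genPreordering g (.mul_self a) fun _ => false

lemma apply_mem_genSubsemiring (g : Fin m → E) (i : Fin m) : g i ∈ genSubsemiring g := by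
  change g i ∈ genPreordering g
  simpa using mul_prod_mem_genPreordering g (.mul_self 1) fun j => decide (j = i)

lemma genPreordering_subset {g : Fin m → E} {T : Subsemiring E} (hsq : ∀ a, a * a ∈ T)
    (hg : ∀ i, g i ∈ T) : genPreordering g ⊆ T := by
  rintro _ ⟨σ, hσ, rfl⟩
  have hsum {s : E} (hs : IsSumSq s) : s ∈ T := by
    induction hs with
    | zero => exact zero_mem T
    | sq_add a _ ih => exact add_mem (hsq a) ih
  refine sum_mem fun ν _ => mul_mem (hsum (hσ ν)) (prod_mem fun j _ => ?_)
  split_ifs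
  exacts [hg j, one_mem T]

end GenPreordering

section Localization

variable {n m : ℕ} {D : Submonoid (MvPolynomial (Fin n) ℝ)} {g : Fin m → MvPolynomial (Fin n) ℝ}

lemma isClosed_KS : IsClosed (KS g) := by
  simp only [KS, Set.ofPred_forall]
  exact isClosed_iInter fun i => isClosed_le continuous_const (g i).continuous_eval

lemma mem_diff_iUnion_Zset {K : Set (Fin n → ℝ)} {x : Fin n → ℝ} :
    x ∈ K \ ⋃ d ∈ (D : Set (MvPolynomial (Fin n) ℝ)), Zset d ↔
      x ∈ K ∧ ∀ d ∈ D, eval x d ≠ 0 := by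
  simp [Zset]

lemma mk_mul_algebraMap {R : Type*} [CommRing R] {M : Submonoid R} (f : R) (d : M) :
    Localization.mk f d * algebraMap R (Localization M) d = algebraMap R (Localization M) f := by
  rw [Localization.mk_eq_mk']
  exact IsLocalization.mk'_spec _ f d

lemma dualClosure_genPreordering_subset :
    dualClosure (genPreordering fun i => algebraMap _ (Localization D) (g i)) ⊆
      PosE D (KS g \ ⋃ d ∈ (D : Set (MvPolynomial (Fin n) ℝ)), Zset d) := by
  intro R hR
  induction R using Localization.induction_on with | _ y
  obtain ⟨f, d⟩ := y
  refine ⟨f, d, rfl, fun x hx => ?_⟩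
  obtain ⟨hxK, hxD⟩ := mem_diff_iUnion_Zset.1 hx
  have hunit (d : D) : IsUnit (aeval (R := ℝ) x (d : MvPolynomial (Fin n) ℝ)) :=
    isUnit_iff_ne_zero.2 (hxD d d.2)
  let ev : Localization D →ₐ[ℝ] ℝ := IsLocalization.liftAlgHom hunit
  have hev (f : MvPolynomial (Fin n) ℝ) : ev (algebraMap _ _ f) = eval x f :=
    IsLocalization.lift_eq _ f
  have hsub : genPreordering (fun i => algebraMap _ (Localization D) (g i)) ⊆
      (Subsemiring.nonneg ℝ).comap (ev : Localization D →+* ℝ) := by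
    refine genPreordering_subset (fun a => ?_) fun i => ?_
    · simpa using mul_self_nonneg (ev a)
    · simpa [hev] using hxK i
  have hmk : 0 ≤ ev (Localization.mk f d) := hR ev.toLinearMap fun t ht => hsub ht
  rw [← hev, ← hev, ← mk_mul_algebraMap f d, map_mul, mul_assoc]
  exact mul_nonneg hmk (mul_self_nonneg _)

lemma abs_apply_le_of_sum_sq_le {ι : Type*} [Fintype ι] {x : ι → ℝ} {c : ℝ} (hc : 1 ≤ c)
    (hx : ∑ i, x i ^ 2 ≤ c) (i : ι) : |x i| ≤ c := by
  have hi : x i ^ 2 ≤ ∑ i, x i ^ 2 :=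
    Finset.single_le_sum (fun i _ => sq_nonneg (x i)) (Finset.mem_univ i)
  exact abs_le_of_sq_le_sq (by nlinarith) (by linarith)

lemma positiveOn_of_forall_genPreordering {p : MvPolynomial (Fin n) ℝ} (hpD : p ∈ D)
    (hp1 : ∀ x ∈ KS g, 1 ≤ eval x p) {k : ℝ} (hX : ∀ x ∈ KS g, ∀ i, |x i| ≤ k * eval x p)
    {L : Localization D →ₗ[ℝ] ℝ}
    (hL : ∀ t ∈ genPreordering fun i => algebraMap _ (Localization D) (g i), 0 ≤ L t) :
    PositiveOn (IsScalarTower.toAlgHom ℝ (MvPolynomial (Fin n) ℝ) (Localization D)) (KS g) L :=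
  fun _ hf e =>
  map_mul_mul_self_nonneg_of_forall_nonneg (φ := algebraMap _ (Localization D))
    (T := genSubsemiring _) (fun _ hx => hx) (mul_self_mem_genSubsemiring _)
    (apply_mem_genSubsemiring _)
    (exists_isUnit_map_eval_le (IsLocalization.map_units _ (⟨p, hpD⟩ : D)) hp1 hX) hf
    (L := L.toAddMonoidHom) hL e

/-- With `u` the image of `d`, the value `L (f / d)` is that of `a ↦ L (u⁻² a)` at `f d`. -/
lemma posE_subset_dualClosure {C : Set (Localization D)} {K : Set (Fin n → ℝ)} (hK : IsClosed K)
    (hC : ∀ L : Localization D →ₗ[ℝ] ℝ, (∀ t ∈ C, 0 ≤ L t) →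
      PositiveOn (IsScalarTower.toAlgHom ℝ (MvPolynomial (Fin n) ℝ) (Localization D)) K L) :
    PosE D (K \ ⋃ d ∈ (D : Set (MvPolynomial (Fin n) ℝ)), Zset d) ⊆ dualClosure C := by
  rintro _ ⟨f, d, rfl, hfd⟩ L hL
  set φ := IsScalarTower.toAlgHom ℝ (MvPolynomial (Fin n) ℝ) (Localization D)
  have hDu (c) (hc : c ∈ D) : IsUnit (φ c) := IsLocalization.map_units _ (⟨c, hc⟩ : D)
  obtain ⟨u, hu : (u : Localization D) = algebraMap _ _ d.1⟩ := hDu d d.2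
  have h := map_nonneg_of_forall_nonneg_off_zeros (f := f * d) hDu hK
    ((hC L hL).comp_mulRight_mul_self ↑u⁻¹) fun x hxK hxD => by
      rw [map_mul]
      exact hfd x (mem_diff_iUnion_Zset.2 ⟨hxK, hxD⟩)
  have hfrac : φ (f * d) * (↑u⁻¹ * ↑u⁻¹) = Localization.mk f d := by
    change algebraMap _ _ (f * d.1) * _ = _
    rw [map_mul, ← mk_mul_algebraMap f d, ← hu]
    linear_combination Localization.mk f d * (u * ↑u⁻¹ + 1) * u.mul_inv
  rwa [LinearMap.comp_apply, LinearMap.mulRight_apply, hfrac] at h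

end Localization

/-- Closure of `T_S^E` in the finest locally convex topology equals
`Pos^E(K_S \ ⋃_{d ∈ D} Z(d))`, under the growth condition on some `p ∈ D`. -/
theorem closure_preordering_eq_pos_localization
    {n m : ℕ} (D : Submonoid (MvPolynomial (Fin n) ℝ))
    (hD0 : (0 : MvPolynomial (Fin n) ℝ) ∉ D)
    (g : Fin m → MvPolynomial (Fin n) ℝ)
    (hKne : (KS g).Nonempty)
    (p : MvPolynomial (Fin n) ℝ) (hpD : p ∈ D)
    (k : ℕ) (hk : 1 ≤ k)
    (hp1 : ∀ x ∈ KS g, 1 ≤ eval x p)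
    (hpgrow : ∀ x ∈ KS g, ∑ i, (x i) ^ 2 ≤ (k : ℝ) * eval x p) :
    dualClosure (genPreordering fun i =>
        algebraMap (MvPolynomial (Fin n) ℝ) (Localization D) (g i))
      = PosE D (KS g \ ⋃ d ∈ (D : Set (MvPolynomial (Fin n) ℝ)), Zset d) := by
  have hX (x) (hx : x ∈ KS g) (i) : |x i| ≤ k * eval x p :=
    abs_apply_le_of_sum_sq_le (one_le_mul_of_one_le_of_one_le (mod_cast hk) (hp1 x hx))
      (hpgrow x hx) i
  exact dualClosure_genPreordering_subset.antisymm <|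
    posE_subset_dualClosure isClosed_KS fun _ hL =>
      positiveOn_of_forall_genPreordering hpD hp1 hX hL

end
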